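/- arXiv:2211.08973 — 5 statements merged into one kernel-verified Lean document; each statement's English description precedes it below -/
import Mathlib

section
/- Assume the Riemann Hypothesis is false, and let Θ ∈ (1/2,1] be the supremum of the real parts of the non-trivial zeros of ζ. Fix σ₀ ∈ (1−Θ, Θ) and ε > 0. There exist sequences x_n → ∞, y_n → ∞ and positive reals δ_n → 0 such that for all n: (log x_n)^{1/(1−σ₀)−δ_n} ≤ y_n ≤ (log x_n)^{1/(1−σ₀)+δ_n} and Ψ(x_n, y_n) < x_n · ρ(log x_n / log y_n) · exp(−y_n^{Θ−σ₀−ε}). -/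
open Real Filter

/-- `Psi x y` is the number of `y`-friable integers up to `x`. -/
noncomputable def Psi (x y : ℝ) : ℕ :=
  Set.ncard {n : ℕ | 1 ≤ n ∧ (n : ℝ) ≤ x ∧ ∀ p : ℕ, p.Prime → p ∣ n → (p : ℝ) ≤ y}

/-- `Θ`, the supremum of the real parts of the nontrivial zeros of `ζ`. -/
noncomputable def Theta : ℝ :=
  sSup (Complex.re '' {z : ℂ | riemannZeta z = 0 ∧ 0 < z.re ∧ z.re < 1})

section Aux


open MeasureTheory ProbabilityTheory Set Topology

lemma frequently_of_real {P : ℂ → Prop} {a c : ℝ} (hac : a < c) (h : ∀ s : ℝ, a < s → P s) :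
    ∃ᶠ z in 𝓝[≠] (c : ℂ), P z := by
  have h1 : Tendsto (fun s : ℝ => (s : ℂ)) (𝓝[≠] c) (𝓝[≠] (c : ℂ)) := by
    refine tendsto_nhdsWithin_of_tendsto_nhds_of_eventually_within _ ?_ ?_
    · exact (Complex.continuous_ofReal.tendsto c).mono_left nhdsWithin_le_nhds
    · filter_upwards [self_mem_nhdsWithin] with s hs
      simpa using hs
  refine h1.frequently (Eventually.frequently ?_)
  filter_upwards [nhdsWithin_le_nhds (Ioi_mem_nhds hac)] with s hs using h s hs

lemma up_closed (μ : Measure ℝ) (hμ : ∀ᵐ t ∂μ, 0 ≤ t) {s s' : ℝ}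
    (hs : s ∈ integrableExpSet (fun t : ℝ => -t) μ) (h : s ≤ s') :
    s' ∈ integrableExpSet (fun t : ℝ => -t) μ := by
  refine Integrable.mono' (g := fun t => rexp (s * (-t))) hs (by fun_prop) ?_
  filter_upwards [hμ] with t ht
  rw [Real.norm_of_nonneg (exp_pos _).le]
  apply exp_le_exp.2
  nlinarith

theorem landau (μ : Measure ℝ) (hμ : ∀ᵐ t ∂μ, 0 ≤ t) (β s1 : ℝ)
    (hint : s1 ∈ integrableExpSet (fun t : ℝ => -t) μ) (U : Set ℂ) (hUo : IsOpen U)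
    (G : ℂ → ℂ) (hG : DifferentiableOn ℂ G U) (hU : ∀ s : ℝ, β < s → (s : ℂ) ∈ U)
    (heq : ∀ s : ℝ, s1 < s → G s = ((mgf (fun t : ℝ => -t) μ s : ℝ) : ℂ)) (s : ℝ) (hs : β < s) :
    s ∈ integrableExpSet (fun t : ℝ => -t) μ := by
  by_contra hns
  set S := integrableExpSet (fun t : ℝ => -t) μ with hS
  have hlow : ∀ x ∈ S, s ≤ x := by
    intro x hx
    by_contra hlt
    exact hns (up_closed μ hμ hx (not_le.1 hlt).le)
  have hbdd : BddBelow S := ⟨s, hlow⟩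
  have hne : S.Nonempty := ⟨s1, hint⟩
  set σ := sInf S with hσ
  have hsσ : s ≤ σ := le_csInf hne hlow
  have hIoi : Ioi σ ⊆ S := by
    intro x hx
    obtain ⟨y, hy, hyx⟩ := exists_lt_of_csInf_lt hne hx
    exact up_closed μ hμ hy hyx.le
  have hint' : Ioi σ ⊆ interior S := interior_maximal hIoi isOpen_Ioi
  have hagree : ∀ x : ℝ, σ < x → G x = complexMGF (fun t : ℝ => -t) μ x := by
    have hpre : IsPreconnected (Complex.ofReal '' Ioi σ) :=
      isPreconnected_Ioi.image _ Complex.continuous_ofReal.continuousOn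
    have hA1 : AnalyticOnNhd ℂ G (Complex.ofReal '' Ioi σ) := by
      rintro _ ⟨x, hx, rfl⟩
      exact hG.analyticAt (hUo.mem_nhds (hU x (by simp at hx; linarith)))
    have hA2 : AnalyticOnNhd ℂ (complexMGF (fun t : ℝ => -t) μ) (Complex.ofReal '' Ioi σ) := by
      rintro _ ⟨x, hx, rfl⟩
      exact analyticAt_complexMGF (by simpa using hint' hx)
    have hm : σ < max σ s1 + 1 := by linarith [le_max_left σ s1]
    have := hA1.eqOn_of_preconnected_of_frequently_eq hA2 hpre
      (z₀ := ((max σ s1 + 1 : ℝ) : ℂ)) ⟨_, hm, rfl⟩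
      (frequently_of_real (a := s1) (by linarith [le_max_right σ s1]) fun x hx => by
        rw [heq x hx, complexMGF_ofReal])
    intro x hx
    exact this ⟨x, hx, rfl⟩
  obtain ⟨r, hr, hball⟩ := Metric.isOpen_iff.1 hUo (σ : ℂ) (hU σ (by linarith))
  set c : ℝ := σ + r / 4 with hc
  have hcσ : σ < c := by linarith
  have hcint : c ∈ interior S := hint' hcσ
  have hsub : Metric.ball (c : ℂ) (r / 2) ⊆ Metric.ball (σ : ℂ) r := by
    apply Metric.ball_subset_ball'
    rw [Complex.dist_eq, ← Complex.ofReal_sub, Complex.norm_real, Real.norm_of_nonneg (by linarith)]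
    linarith
  have hev : G =ᶠ[𝓝 (c : ℂ)] complexMGF (fun t : ℝ => -t) μ := by
    refine ((hG.analyticAt (hUo.mem_nhds (hU c (by linarith)))).frequently_eq_iff_eventually_eq
      (analyticAt_complexMGF (by simpa using hcint))).1 (frequently_of_real hcσ hagree)
  have hsum := Complex.hasSum_taylorSeries_on_ball (f := G) (c := (c : ℂ)) (r := r / 2)
    (hG.mono (hsub.trans hball)) (z := ((c - 3 * r / 8 : ℝ) : ℂ)) (by
      rw [Metric.mem_ball, Complex.dist_eq, ← Complex.ofReal_sub, Complex.norm_real,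
        Real.norm_eq_abs, abs_lt]
      constructor <;> linarith)
  have hterm : ∀ n : ℕ, (((n.factorial : ℂ))⁻¹ • (((c - 3 * r / 8 : ℝ) : ℂ) - (c : ℂ)) ^ n •
      iteratedDeriv n G (c : ℂ)) =
      ((∫ t, (3 * r / 8 * t) ^ n / n.factorial * rexp (c * (-t)) ∂μ : ℝ) : ℂ) := by
    intro n
    rw [Filter.EventuallyEq.iteratedDeriv_eq n hev, iteratedDeriv_complexMGF (by simpa using hcint)]
    have e1 : (∫ t : ℝ, ((-t : ℝ) : ℂ) ^ n * Complex.exp ((c : ℂ) * ((-t : ℝ) : ℂ)) ∂μ)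
        = ((∫ t : ℝ, (-t) ^ n * rexp (c * (-t)) ∂μ : ℝ) : ℂ) := by
      rw [← integral_complex_ofReal]
      congr 1
      ext t
      push_cast
      rfl
    rw [e1, ← Complex.ofReal_sub]
    simp only [smul_eq_mul]
    rw [← Complex.ofReal_pow, ← Complex.ofReal_natCast, ← Complex.ofReal_inv, ← Complex.ofReal_mul,
      ← Complex.ofReal_mul, ← integral_const_mul, ← integral_const_mul]
    congr 2
    ext t
    have : (c - 3 * r / 8 - c) ^ n * (-t) ^ n = (3 * r / 8 * t) ^ n := by
      rw [← mul_pow]; ring_nf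
    rw [← this]
    ring
  simp_rw [hterm] at hsum
  have hsumR : Summable (fun n : ℕ => ∫ t, (3 * r / 8 * t) ^ n / n.factorial * rexp (c * (-t)) ∂μ) :=
    Complex.summable_ofReal.1 hsum.summable
  have hI : ∀ n : ℕ, Integrable (fun t : ℝ => (3 * r / 8 * t) ^ n / n.factorial * rexp (c * (-t))) μ := by
    intro n
    have := (integrable_pow_mul_exp_of_mem_interior_integrableExpSet hcint n).const_mul
      ((-(3 * r / 8)) ^ n / n.factorial)
    refine this.congr (Eventually.of_forall fun t => ?_)
    have : (-(3 * r / 8)) ^ n * (-t) ^ n = (3 * r / 8 * t) ^ n := by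
      rw [← mul_pow]; ring_nf
    simp only
    rw [← this]
    ring
  have hnn : ∀ n : ℕ, 0 ≤ᵐ[μ] (fun t : ℝ => (3 * r / 8 * t) ^ n / n.factorial * rexp (c * (-t))) := by
    intro n
    filter_upwards [hμ] with t ht
    simp only [Pi.zero_apply]
    positivity
  have hfin : Integrable (fun t : ℝ => rexp ((c - 3 * r / 8) * (-t))) μ := by
    refine ⟨by fun_prop, ?_⟩
    rw [hasFiniteIntegral_iff_ofReal (Eventually.of_forall fun t => (exp_pos _).le)]
    have e : ∫⁻ t, ENNReal.ofReal (rexp ((c - 3 * r / 8) * (-t))) ∂μ =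
        ∑' n : ℕ, ENNReal.ofReal (∫ t, (3 * r / 8 * t) ^ n / n.factorial * rexp (c * (-t)) ∂μ) := by
      simp_rw [fun n => ofReal_integral_eq_lintegral_ofReal (hI n) (hnn n)]
      rw [← lintegral_tsum (fun n => (hI n).aestronglyMeasurable.aemeasurable.ennreal_ofReal)]
      refine lintegral_congr_ae ?_
      filter_upwards [hμ] with t ht
      have h1 : HasSum (fun n : ℕ => (3 * r / 8 * t) ^ n / n.factorial * rexp (c * (-t)))
          (rexp (3 * r / 8 * t) * rexp (c * (-t))) := by
        have := NormedSpace.expSeries_div_hasSum_exp (𝔸 := ℝ) (3 * r / 8 * t)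
        rw [← Real.exp_eq_exp_ℝ] at this
        exact this.mul_right _
      rw [← ENNReal.ofReal_tsum_of_nonneg (fun n => by positivity) h1.summable, h1.tsum_eq,
        ← Real.exp_add]
      congr 2
      ring
    rw [e]
    exact lt_top_iff_ne_top.2 hsumR.tsum_ofReal_ne_top
  have hmem : c - 3 * r / 8 ∈ S := hfin
  have := csInf_le hbdd hmem
  linarith



lemma dens_integrable {ν : Measure ℝ} {g : ℝ → ℝ} (hg : Measurable g) (hg0 : ∀ x, 0 ≤ g x)
    {h : ℝ → ℝ} :
    Integrable h (ν.withDensity fun x => ENNReal.ofReal (g x)) ↔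
      Integrable (fun x => g x * h x) ν := by
  rw [integrable_withDensity_iff_integrable_smul' hg.ennreal_ofReal (by simp)]
  simp only [ENNReal.toReal_ofReal (hg0 _), smul_eq_mul]

lemma dens_integral {ν : Measure ℝ} {g : ℝ → ℝ} (hg : Measurable g) (hg0 : ∀ x, 0 ≤ g x)
    {h : ℝ → ℝ} :
    ∫ x, h x ∂(ν.withDensity fun x => ENNReal.ofReal (g x)) = ∫ x, g x * h x ∂ν := by
  rw [integral_withDensity_eq_integral_toReal_smul hg.ennreal_ofReal (by simp)]
  simp only [ENNReal.toReal_ofReal (hg0 _), smul_eq_mul]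

lemma zeta_real_integral {s : ℝ} (hs : 1 < s) :
    (riemannZeta s : ℂ) = ((s * (1 / (s - 1) -
      ∫ t in Ioi (1 : ℝ), Int.fract t / t * rexp (s * (-Real.log t)) : ℝ) : ℝ) : ℂ) := by
  have h1 := LSeries_eq_mul_integral_of_nonneg (fun _ => 1) (r := 1) zero_le_one (s := s)
    (by simpa using hs) (by
      refine Asymptotics.isBigO_of_le _ fun n => ?_
      simp) (fun _ => zero_le_one)
  have h2 : LSeries (fun n => ((1 : ℝ) : ℂ)) (s : ℂ) = riemannZeta s := by
    rw [← LSeries_one_eq_riemannZeta (by simpa using hs)]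
    congr 1
  rw [← h2, h1, Complex.ofReal_mul]
  congr 1
  have hpow : ∀ t ∈ Ioi (1 : ℝ), Int.fract t / t * rexp (s * (-Real.log t))
      = Int.fract t * t ^ (-(s + 1)) := by
    intro t ht
    have ht0 : (0 : ℝ) < t := lt_trans zero_lt_one ht
    rw [Real.rpow_def_of_pos ht0, show Real.log t * -(s + 1) = s * (-Real.log t) + (-Real.log t) by ring,
      Real.exp_add, Real.exp_neg (Real.log t), Real.exp_log ht0]
    field_simp
  rw [setIntegral_congr_fun measurableSet_Ioi hpow]
  have hi1 : IntegrableOn (fun t : ℝ => t ^ (-s)) (Ioi 1) :=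
    integrableOn_Ioi_rpow_of_lt (by linarith) zero_lt_one
  have hi2 : IntegrableOn (fun t : ℝ => Int.fract t * t ^ (-(s + 1))) (Ioi 1) := by
    refine Integrable.mono' (integrableOn_Ioi_rpow_of_lt (a := -(s + 1)) (by linarith) zero_lt_one)
      (Measurable.aestronglyMeasurable (by fun_prop)) ?_
    filter_upwards [ae_restrict_mem measurableSet_Ioi] with t ht
    have ht0 : (0 : ℝ) < t := lt_trans zero_lt_one ht
    rw [Real.norm_of_nonneg (mul_nonneg (Int.fract_nonneg _) (rpow_nonneg ht0.le _))]
    exact mul_le_of_le_one_left (rpow_nonneg ht0.le _) (Int.fract_lt_one _).le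
  have h3 : (1 / (s - 1) : ℝ) = ∫ t in Ioi (1 : ℝ), t ^ (-s) := by
    rw [integral_Ioi_rpow_of_lt (by linarith) zero_lt_one, Real.one_rpow]
    rw [← neg_div_neg_eq]
    congr 1
    ring
  rw [h3, ← integral_sub hi1 hi2, ← integral_complex_ofReal]
  refine setIntegral_congr_fun measurableSet_Ioi fun t ht => ?_
  have ht0 : (0 : ℝ) < t := lt_trans zero_lt_one ht
  have e : (t : ℂ) ^ (-((s : ℂ) + 1)) = ((t ^ (-(s + 1)) : ℝ) : ℂ) := by
    rw [Complex.ofReal_cpow ht0.le]; push_cast; rfl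
  have e2 : t ^ (-s) = t * t ^ (-(s + 1)) := by
    rw [← Real.rpow_one_add' ht0.le (by linarith)]; congr 1; ring
  simp only [Finset.sum_const, Nat.card_Icc, nsmul_eq_mul]
  rw [e, e2, ← sub_mul, Complex.ofReal_mul]
  congr 1
  rw [← Int.self_sub_floor, ← natCast_floor_eq_intCast_floor ht0.le]
  simp

lemma zeta1_pos_Ioo {w : ℝ} (hw0 : 0 < w) (hw1 : w < 1) : ∃ z : ℝ, 0 < z ∧ riemannZeta₁ w = z := by
  set ν : Measure ℝ := volume.restrict (Ioi 1)
  set g : ℝ → ℝ := fun t => Int.fract t * |t|⁻¹ with hg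
  have hgm : Measurable g := by fun_prop
  have hg0 : ∀ x, 0 ≤ g x := fun x => mul_nonneg (Int.fract_nonneg _) (by positivity)
  set μ := ν.withDensity fun x => ENNReal.ofReal (g x) with hμ
  set X : ℝ → ℝ := fun t => -Real.log t with hX
  have hS : Ioi (0 : ℝ) ⊆ integrableExpSet X μ := by
    intro s hs
    show Integrable _ _
    rw [hμ, dens_integrable hgm hg0]
    refine Integrable.mono' (integrableOn_Ioi_rpow_of_lt (a := -(s + 1)) (by simp at hs; linarith) zero_lt_one)
      (Measurable.aestronglyMeasurable (by fun_prop)) ?_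
    filter_upwards [ae_restrict_mem measurableSet_Ioi] with t ht
    have ht0 : (0 : ℝ) < t := lt_trans zero_lt_one ht
    rw [Real.norm_of_nonneg (mul_nonneg (hg0 _) (exp_pos _).le)]
    have : t ^ (-(s + 1)) = 1 * |t|⁻¹ * rexp (s * X t) := by
      rw [Real.rpow_def_of_pos ht0, show Real.log t * -(s + 1) = s * (-Real.log t) + (-Real.log t) by ring,
        Real.exp_add, Real.exp_neg (Real.log t), Real.exp_log ht0, abs_of_pos ht0]
      ring
    rw [this]
    have := (Int.fract_lt_one t).le
    simp only [hg]
    gcongr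
  have hSi : Ioi (0 : ℝ) ⊆ interior (integrableExpSet X μ) := interior_maximal hS isOpen_Ioi
  have hA : DifferentiableOn ℂ (complexMGF X μ) {z | 0 < z.re} :=
    differentiableOn_complexMGF.mono fun z hz => hSi hz
  have hopen : IsOpen {z : ℂ | 0 < z.re} := isOpen_lt continuous_const Complex.continuous_re
  have hpre : IsPreconnected {z : ℂ | 0 < z.re} := (convex_halfSpace_re_gt 0).isPreconnected
  have hF : DifferentiableOn ℂ (fun z => z - z * (z - 1) * complexMGF X μ z) {z | 0 < z.re} := by
    fun_prop
  have hEq := (differentiable_riemannZeta₁.differentiableOn.analyticOnNhd hopen).eqOn_of_preconnected_of_frequently_eq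
    (hF.analyticOnNhd hopen) hpre (z₀ := ((2 : ℝ) : ℂ)) (by simp)
    (frequently_of_real (a := 1) one_lt_two fun s hs => by
      have h1 : (s : ℂ) ≠ 1 := by exact_mod_cast hs.ne'
      have h1' : (s : ℂ) - 1 ≠ 0 := sub_ne_zero.2 h1
      have e1 : riemannZeta₁ s = (s - 1) * riemannZeta s := by
        rw [riemannZeta_eq_inv_sub_mul h1]; field_simp
      rw [e1, zeta_real_integral hs, complexMGF_ofReal, mgf, hμ, dens_integral hgm hg0]
      have e2 : ∫ t in Ioi (1 : ℝ), Int.fract t / t * rexp (s * (-Real.log t)) =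
          ∫ t in Ioi (1 : ℝ), g t * rexp (s * X t) := by
        refine setIntegral_congr_fun measurableSet_Ioi fun t ht => ?_
        have ht0 : (0 : ℝ) < t := lt_trans zero_lt_one ht
        simp only [hg, hX, abs_of_pos ht0]
        ring
      rw [e2]
      push_cast
      field_simp
      rfl)
  refine ⟨w - w * (w - 1) * mgf X μ w, ?_, ?_⟩
  · have : 0 ≤ mgf X μ w := mgf_nonneg
    nlinarith [mul_nonneg (mul_pos hw0 (sub_pos.2 hw1)).le this]
  · rw [hEq (show (w : ℂ) ∈ {z : ℂ | 0 < z.re} by simpa using hw0)]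
    simp only [complexMGF_ofReal]
    push_cast
    ring



noncomputable def aP (σ : ℝ) (p : ℕ) : ℝ := -Real.log (1 - (p : ℝ) ^ (-σ))

noncomputable def eP (σ : ℝ) (p : ℕ) (s : ℂ) : ℂ :=
  (aP σ p : ℂ) * (p : ℂ) ^ (-s) + Complex.log (1 - (p : ℂ) ^ (-(s + σ)))

noncomputable def EE (σ : ℝ) (s : ℂ) : ℂ := ∑' p : Nat.Primes, eP σ p s

lemma prime_rpow_le {σ : ℝ} (hσ : 0 < σ) {p : ℕ} (hp : p.Prime) :
    (p : ℝ) ^ (-σ) ≤ (2 : ℝ) ^ (-σ) :=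
  Real.rpow_le_rpow_of_nonpos zero_lt_two (by exact_mod_cast hp.two_le) (by linarith)

lemma two_rpow_lt {σ : ℝ} (hσ : 0 < σ) : (2 : ℝ) ^ (-σ) < 1 :=
  Real.rpow_lt_one_of_one_lt_of_neg one_lt_two (by linarith)

lemma aP_nonneg {σ : ℝ} (hσ : 0 < σ) {p : ℕ} (hp : p.Prime) : 0 ≤ aP σ p := by
  have h1 := prime_rpow_le hσ hp
  have h2 := two_rpow_lt hσ
  have h3 : 0 ≤ (p : ℝ) ^ (-σ) := by positivity
  unfold aP
  have := Real.log_nonpos (x := 1 - (p : ℝ) ^ (-σ)) (by linarith) (by linarith)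
  linarith

lemma aP_le {σ : ℝ} (hσ : 0 < σ) {p : ℕ} (hp : p.Prime) : aP σ p ≤ aP σ 2 := by
  have h1 := prime_rpow_le hσ hp
  have h2 := two_rpow_lt hσ
  unfold aP
  have := Real.log_le_log (x := 1 - (2 : ℝ) ^ (-σ)) (y := 1 - (p : ℝ) ^ (-σ)) (by linarith) (by linarith)
  push_cast
  linarith

lemma aP_cast {σ : ℝ} (hσ : 0 < σ) {p : ℕ} (hp : p.Prime) :
    (aP σ p : ℂ) = -Complex.log (1 - (((p : ℝ) ^ (-σ) : ℝ) : ℂ)) := by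
  have h1 := prime_rpow_le hσ hp
  have h2 := two_rpow_lt hσ
  unfold aP
  push_cast
  rw [Complex.ofReal_log (by linarith)]
  push_cast
  rfl

lemma log_bd {q : ℝ} (hq : q < 1) {z : ℂ} (hz : ‖z‖ ≤ q) :
    ‖Complex.log (1 - z) + z‖ ≤ (1 - q)⁻¹ * ‖z‖ ^ 2 := by
  have h := Complex.norm_log_one_add_sub_self_le (z := -z) (by rw [norm_neg]; linarith)
  rw [norm_neg, sub_neg_eq_add, ← sub_eq_add_neg] at h
  refine h.trans ?_
  have h3 : (1 - ‖z‖)⁻¹ ≤ (1 - q)⁻¹ := inv_anti₀ (by linarith) (by linarith)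
  have h4 : 0 ≤ (1 - q)⁻¹ := inv_nonneg.2 (by linarith)
  have h5 := mul_le_mul_of_nonneg_left h3 (sq_nonneg ‖z‖)
  nlinarith [mul_nonneg h4 (sq_nonneg ‖z‖)]

lemma norm_pcpow {p : ℕ} (hp : p.Prime) (s : ℂ) : ‖(p : ℂ) ^ (-s)‖ = (p : ℝ) ^ (-s.re) := by
  rw [Complex.norm_natCast_cpow_of_pos hp.pos, Complex.neg_re]

lemma EE_diff {σ β : ℝ} (hσ : 0 < σ) (hβ : 0 < β) (hβ2 : 1 - 2 * σ < β) :
    DifferentiableOn ℂ (EE σ) {s | β < s.re} := by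
  set q := (2 : ℝ) ^ (-σ) with hqd
  have hq : q < 1 := two_rpow_lt hσ
  have hK : 0 ≤ (1 - q)⁻¹ := inv_nonneg.2 (by linarith)
  have hopen : IsOpen {s : ℂ | β < s.re} := isOpen_lt continuous_const Complex.continuous_re
  have hsum : Summable (fun p : Nat.Primes => 2 * (1 - q)⁻¹ * ((p : ℕ) : ℝ) ^ (-(2 * σ + β))) :=
    (Nat.Primes.summable_rpow.2 (by linarith)).mul_left _
  have hlt : ∀ (p : ℕ), p.Prime → ∀ s : ℂ, 0 < s.re → ‖(p : ℂ) ^ (-(s + σ))‖ ≤ q := by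
    intro p hp s hs
    rw [norm_pcpow hp]
    simp only [Complex.add_re, Complex.ofReal_re]
    refine le_trans ?_ (prime_rpow_le hσ hp)
    exact Real.rpow_le_rpow_of_exponent_le (by exact_mod_cast hp.one_lt.le) (by linarith)
  refine Complex.differentiableOn_tsum_of_summable_norm hsum (fun p => ?_) hopen ?_
  · intro s hs
    have hp0 : ((p : ℕ) : ℂ) ≠ 0 := by exact_mod_cast p.2.ne_zero
    have hs' : 1 - ((p : ℕ) : ℂ) ^ (-(s + σ)) ∈ Complex.slitPlane := by
      rw [sub_eq_add_neg]
      apply Complex.mem_slitPlane_of_norm_lt_one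
      rw [norm_neg]
      exact lt_of_le_of_lt (hlt p p.2 s (hβ.trans hs)) hq
    apply DifferentiableAt.differentiableWithinAt
    unfold eP
    refine DifferentiableAt.add ?_ ?_
    · refine (differentiableAt_const _).mul (DifferentiableAt.const_cpow (by fun_prop) (Or.inl hp0))
    · refine DifferentiableAt.clog ?_ hs'
      refine (differentiableAt_const _).sub (DifferentiableAt.const_cpow (by fun_prop) (Or.inl hp0))
  · intro p s hs
    have hs : β < s.re := hs
    have hp1 : (1 : ℝ) ≤ ((p : ℕ) : ℝ) := by exact_mod_cast p.2.one_lt.le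
    have hp0 : (0 : ℝ) < ((p : ℕ) : ℝ) := by linarith
    have hpc : ((p : ℕ) : ℂ) ≠ 0 := by exact_mod_cast p.2.ne_zero
    set zσ : ℂ := ((((p : ℕ) : ℝ) ^ (-σ) : ℝ) : ℂ) with hz
    have hzn : ‖zσ‖ = ((p : ℕ) : ℝ) ^ (-σ) := by
      rw [hz, Complex.norm_real, Real.norm_of_nonneg (by positivity)]
    have hsplit : ((p : ℕ) : ℂ) ^ (-(s + σ)) = zσ * ((p : ℕ) : ℂ) ^ (-s) := by
      rw [neg_add, Complex.cpow_add _ _ hpc, mul_comm, hz, Complex.ofReal_cpow hp0.le]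
      push_cast; rfl
    have hdec : eP σ p s = -(Complex.log (1 - zσ) + zσ) * ((p : ℕ) : ℂ) ^ (-s)
        + (Complex.log (1 - ((p : ℕ) : ℂ) ^ (-(s + σ))) + ((p : ℕ) : ℂ) ^ (-(s + σ))) := by
      unfold eP
      rw [aP_cast hσ p.2, ← hz]
      nth_rewrite 3 [hsplit]
      ring
    rw [hdec]
    have b1 := log_bd hq (z := zσ) (by rw [hzn]; exact prime_rpow_le hσ p.2)
    have b2 := log_bd hq (hlt p p.2 s (hβ.trans hs))
    have c1 : ‖zσ‖ ^ 2 * ‖((p : ℕ) : ℂ) ^ (-s)‖ ≤ ((p : ℕ) : ℝ) ^ (-(2 * σ + β)) := by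
      rw [hzn, norm_pcpow p.2, ← Real.rpow_natCast, ← Real.rpow_mul hp0.le, ← Real.rpow_add hp0]
      apply Real.rpow_le_rpow_of_exponent_le hp1
      push_cast
      linarith
    have c2 : ‖((p : ℕ) : ℂ) ^ (-(s + σ))‖ ^ 2 ≤ ((p : ℕ) : ℝ) ^ (-(2 * σ + β)) := by
      rw [norm_pcpow p.2, ← Real.rpow_natCast, ← Real.rpow_mul hp0.le]
      apply Real.rpow_le_rpow_of_exponent_le hp1
      simp only [Complex.add_re, Complex.ofReal_re]
      push_cast
      linarith
    refine (norm_add_le _ _).trans ?_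
    rw [norm_mul, norm_neg]
    have d1 := mul_le_mul_of_nonneg_right b1 (norm_nonneg (((p : ℕ) : ℂ) ^ (-s)))
    have d2 := mul_le_mul_of_nonneg_left c1 hK
    have d3 := mul_le_mul_of_nonneg_left c2 hK
    nlinarith

lemma summable_aP {σ : ℝ} (hσ : 0 < σ) {s : ℝ} (hs : 1 < s) :
    Summable (fun p : Nat.Primes => aP σ p * ((p : ℕ) : ℝ) ^ (-s)) := by
  refine Summable.of_nonneg_of_le (fun p => mul_nonneg (aP_nonneg hσ p.2) (by positivity))
    (fun p => mul_le_mul_of_nonneg_right (aP_le hσ p.2) (by positivity))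
    ((Nat.Primes.summable_rpow.2 (by linarith)).mul_left _)

lemma EE_real {σ : ℝ} (hσ : 0 < σ) {s : ℝ} (hs : 1 < s) :
    ∃ z : ℝ, 0 < z ∧ riemannZeta ((s : ℂ) + σ) = z ∧
      ((∑' p : Nat.Primes, aP σ p * ((p : ℕ) : ℝ) ^ (-s) : ℝ) : ℂ) = (Real.log z : ℂ) + EE σ s := by
  have hw : (1 : ℝ) < s + σ := by linarith
  have hw0 : 0 < s + σ := by linarith
  have hsm : Summable (fun p : Nat.Primes => ((p : ℕ) : ℝ) ^ (-(s + σ))) :=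
    Nat.Primes.summable_rpow.2 (by linarith)
  have hcast : ∀ p : Nat.Primes, ((p : ℕ) : ℂ) ^ (-((s : ℂ) + σ)) = ((((p : ℕ) : ℝ) ^ (-(s + σ)) : ℝ) : ℂ) := by
    intro p
    rw [Complex.ofReal_cpow (by positivity)]
    push_cast; rfl
  have hsmC : Summable (fun p : Nat.Primes => ((p : ℕ) : ℂ) ^ (-((s : ℂ) + σ))) := by
    simp_rw [hcast]
    exact Complex.summable_ofReal.2 hsm
  have hlogsum := hsmC.clog_one_sub
  have hlog : ∀ p : Nat.Primes, -Complex.log (1 - ((p : ℕ) : ℂ) ^ (-((s : ℂ) + σ))) = ((aP (s + σ) p : ℝ) : ℂ) := by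
    intro p
    rw [hcast, aP_cast hw0 p.2]
  have hz := riemannZeta_eulerProduct_exp_log (s := (s : ℂ) + σ) (by simpa using hw)
  have hts : ∑' p : Nat.Primes, -Complex.log (1 - ((p : ℕ) : ℂ) ^ (-((s : ℂ) + σ))) =
      ((∑' p : Nat.Primes, aP (s + σ) p : ℝ) : ℂ) := by
    rw [Complex.ofReal_tsum]
    exact tsum_congr hlog
  refine ⟨rexp (∑' p : Nat.Primes, aP (s + σ) p), exp_pos _, ?_, ?_⟩
  · rw [← hz, hts, Complex.ofReal_exp]
  · rw [Real.log_exp, ← hts, EE, ← Summable.tsum_add hlogsum.neg, Complex.ofReal_tsum]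
    · apply tsum_congr
      intro p
      unfold eP
      push_cast
      rw [Complex.ofReal_cpow (by positivity)]
      push_cast
      ring
    · unfold eP
      refine Summable.add ?_ hlogsum
      have := Complex.summable_ofReal.2 (summable_aP hσ hs)
      refine this.congr fun p => ?_
      push_cast
      rw [Complex.ofReal_cpow (by positivity)]
      push_cast
      rfl



noncomputable def gg (ξ : ℝ) : ℝ := ∫ a in (0 : ℝ)..1, rexp (ξ * a)

noncomputable def II (ξ : ℝ) : ℝ := ∫ x in (0 : ℝ)..ξ, gg x

lemma gg_cont : Continuous gg := by
  unfold gg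
  exact intervalIntegral.continuous_parametric_intervalIntegral_of_continuous' (by fun_prop) 0 1

lemma gg_mul (x : ℝ) : x * gg x = rexp x - 1 := by
  unfold gg
  have := intervalIntegral.mul_integral_comp_mul_left (a := 0) (b := 1) (f := rexp) x
  rw [this]
  simp

lemma gg_mono : Monotone gg := by
  intro x y hxy
  unfold gg
  apply intervalIntegral.integral_mono_on zero_le_one
  · exact Continuous.intervalIntegrable (by fun_prop) _ _
  · exact Continuous.intervalIntegrable (by fun_prop) _ _
  · intro a ha
    exact exp_le_exp.2 (mul_le_mul_of_nonneg_right hxy ha.1)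

lemma gg_zero : gg 0 = 1 := by simp [gg]

lemma gg_nonneg (x : ℝ) : 0 ≤ gg x := by
  unfold gg
  exact intervalIntegral.integral_nonneg zero_le_one fun a _ => (exp_pos _).le

lemma gg_le_exp {x : ℝ} (hx : 0 ≤ x) : gg x ≤ rexp x := by
  have h : gg x ≤ ∫ a in (0 : ℝ)..1, rexp x := by
    unfold gg
    apply intervalIntegral.integral_mono_on zero_le_one
    · exact Continuous.intervalIntegrable (by fun_prop) _ _
    · exact Continuous.intervalIntegrable (by fun_prop) _ _
    · intro a ha
      exact exp_le_exp.2 (by nlinarith [ha.2])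
  simpa using h

lemma II_hasDeriv (x : ℝ) : HasDerivAt II (gg x) x := by
  unfold II
  exact intervalIntegral.integral_hasDerivAt_right (gg_cont.intervalIntegrable _ _)
    (gg_cont.stronglyMeasurableAtFilter _ _) gg_cont.continuousAt

lemma II_cont : Continuous II := continuous_iff_continuousAt.2 fun x => (II_hasDeriv x).continuousAt

lemma II_nonneg {x : ℝ} (hx : 0 ≤ x) : 0 ≤ II x :=
  intervalIntegral.integral_nonneg hx fun a _ => gg_nonneg a

lemma integral_exp_Ioi0 {c : ℝ} (hc : c < 0) : ∫ t in Ioi (0 : ℝ), rexp (c * t) = -1 / c := by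
  rw [integral_exp_mul_Ioi hc]; simp

lemma inner_A {a s : ℝ} (ha : 0 < a) (has : a < s) :
    ∫ t in Ioi (0 : ℝ), t * gg (t * a) * rexp (s * (-t)) = 1 / s * (1 / (s - a)) := by
  have h1 : ∀ t ∈ Ioi (0 : ℝ), t * gg (t * a) * rexp (s * (-t)) =
      1 / a * (rexp ((a - s) * t) - rexp (-s * t)) := by
    intro t _
    have h := gg_mul (t * a)
    have e1 : rexp ((a - s) * t) = rexp (t * a) * rexp (s * (-t)) := by
      rw [← Real.exp_add]; ring_nf
    have e2 : rexp (-s * t) = rexp (s * (-t)) := by ring_nf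
    rw [e1, e2]
    field_simp
    linear_combination h
  rw [setIntegral_congr_fun measurableSet_Ioi h1, integral_const_mul, integral_sub
    (integrableOn_exp_mul_Ioi (by linarith) _) (integrableOn_exp_mul_Ioi (by linarith) _),
    integral_exp_Ioi0 (by linarith), integral_exp_Ioi0 (by linarith)]
  have : a - s ≠ 0 := by linarith
  have : s - a ≠ 0 := by linarith
  have : s ≠ 0 := by linarith
  field_simp
  ring

lemma trans_A {κ s : ℝ} (hκ : 0 < κ) (hκs : κ < s) :
    IntegrableOn (fun t => II (κ * t) * rexp (s * (-t))) (Ioi 0) ∧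
    ∫ t in Ioi (0 : ℝ), II (κ * t) * rexp (s * (-t)) = 1 / s * Real.log (s / (s - κ)) := by
  set μ : Measure ℝ := volume.restrict (Ioi 0)
  set ν : Measure ℝ := volume.restrict (Ioc 0 κ)
  set F : ℝ → ℝ → ℝ := fun t a => t * gg (t * a) * rexp (s * (-t)) with hF
  have hA : ∀ t, II (κ * t) * rexp (s * (-t)) = ∫ a, F t a ∂ν := by
    intro t
    have := intervalIntegral.mul_integral_comp_mul_left (a := 0) (b := κ) (f := gg) t
    rw [← intervalIntegral.integral_of_le hκ.le]
    simp only [hF]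
    rw [intervalIntegral.integral_mul_const, intervalIntegral.integral_const_mul, this, II, mul_comm t κ]
    simp
  have hcont : Continuous (Function.uncurry F) := by
    have := gg_cont
    simp only [hF, Function.uncurry_def]
    fun_prop
  set d := (s - κ) / 2 with hd
  have hd0 : 0 < d := by simp only [hd]; linarith
  have hint : Integrable (Function.uncurry F) (μ.prod ν) := by
    have h1 : Integrable (fun t => 1 / d * rexp (-d * t)) μ :=
      (integrableOn_exp_mul_Ioi (by linarith) _).const_mul _
    refine (h1.comp_fst ν).mono' hcont.aestronglyMeasurable ?_
    rw [Measure.prod_restrict]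
    filter_upwards [ae_restrict_mem (measurableSet_Ioi.prod measurableSet_Ioc)] with x hx
    obtain ⟨t, a⟩ := x
    obtain ⟨ht, ha⟩ := hx
    simp only [mem_Ioi, mem_Ioc] at ht ha
    simp only [Function.uncurry_apply_pair, hF]
    rw [Real.norm_of_nonneg (mul_nonneg (mul_nonneg ht.le (gg_nonneg _)) (exp_pos _).le)]
    have h2 : gg (t * a) ≤ rexp (t * κ) :=
      (gg_le_exp (by nlinarith)).trans (exp_le_exp.2 (by nlinarith))
    have h3 : t ≤ 1 / d * rexp (d * t) := by
      have := Real.add_one_le_exp (d * t)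
      rw [one_div, le_inv_mul_iff₀ hd0]
      linarith
    calc t * gg (t * a) * rexp (s * (-t)) ≤ (1 / d * rexp (d * t)) * rexp (t * κ) * rexp (s * (-t)) := by
          gcongr
          exact gg_nonneg _
      _ = 1 / d * rexp (-d * t) := by
          rw [mul_assoc, mul_assoc, ← Real.exp_add, ← Real.exp_add]
          congr 2
          simp only [hd]; ring
  refine ⟨?_, ?_⟩
  · have := hint.integral_prod_left
    simp only [Function.uncurry_apply_pair] at this
    simp_rw [hA]
    exact this
  · simp_rw [hA]
    rw [integral_integral_swap hint]
    have h1 : ∀ a ∈ Ioc 0 κ, ∫ t, F t a ∂μ = 1 / s * (1 / (s - a)) := fun a ha =>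
      inner_A ha.1 (by linarith [ha.2])
    rw [setIntegral_congr_fun measurableSet_Ioc h1, integral_const_mul,
      ← intervalIntegral.integral_of_le hκ.le]
    congr 1
    have := intervalIntegral.integral_comp_sub_left (a := 0) (b := κ) (fun x => 1 / x) s
    rw [this, integral_one_div_of_pos (by linarith) (by linarith)]
    simp

noncomputable def QQ (σ t : ℝ) : ℝ := ∑' p : Nat.Primes, if Real.log (p : ℕ) ≤ t then aP σ p else 0

lemma primes_finite (t : ℝ) : {p : Nat.Primes | Real.log (p : ℕ) ≤ t}.Finite := by
  refine Set.Finite.of_injOn (f := fun p : Nat.Primes => (p : ℕ)) (t := Iic ⌊rexp t⌋₊) ?_ ?_ (finite_Iic _)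
  · intro p hp
    apply Nat.le_floor
    have := exp_le_exp.2 hp
    rwa [Real.exp_log (by exact_mod_cast p.2.pos)] at this
  · intro p _ q _ h
    exact Subtype.ext h

lemma QQ_summable (σ t : ℝ) :
    Summable (fun p : Nat.Primes => if Real.log (p : ℕ) ≤ t then aP σ p else 0) := by
  apply summable_of_hasFiniteSupport
  refine (primes_finite t).subset ?_
  intro p hp
  by_contra h
  simp only [mem_ofPred_eq] at h
  simp [h] at hp

lemma QQ_nonneg {σ : ℝ} (hσ : 0 < σ) (t : ℝ) : 0 ≤ QQ σ t := by
  apply tsum_nonneg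
  intro p
  split_ifs
  · exact aP_nonneg hσ p.2
  · rfl

lemma QQ_mono {σ : ℝ} (hσ : 0 < σ) : Monotone (QQ σ) := by
  intro t t' h
  apply Summable.tsum_le_tsum _ (QQ_summable _ _) (QQ_summable _ _)
  intro p
  have := aP_nonneg hσ p.2
  split_ifs <;> linarith

lemma exp_log_prime (p : Nat.Primes) (s : ℝ) : ((p : ℕ) : ℝ) ^ (-s) = rexp (-s * Real.log (p : ℕ)) := by
  rw [Real.rpow_def_of_pos (by exact_mod_cast p.2.pos), mul_comm]

lemma QQ_le {σ s : ℝ} (hσ : 0 < σ) (hs : 1 < s) (t : ℝ) :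
    QQ σ t ≤ (∑' p : Nat.Primes, aP σ p * ((p : ℕ) : ℝ) ^ (-s)) * rexp (s * t) := by
  rw [← tsum_mul_right]
  apply Summable.tsum_le_tsum _ (QQ_summable _ _) ((summable_aP hσ hs).mul_right _)
  intro p
  have := aP_nonneg hσ p.2
  split_ifs with h
  · rw [mul_assoc, exp_log_prime, ← Real.exp_add]
    have h1 : (1 : ℝ) ≤ rexp (-s * Real.log (p : ℕ) + s * t) := by
      apply Real.one_le_exp
      nlinarith
    exact le_mul_of_one_le_right this h1
  · positivity

lemma trans_Q {σ s : ℝ} (hσ : 0 < σ) (hs : 1 < s) :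
    IntegrableOn (fun t => QQ σ t * rexp (s * (-t))) (Ioi 0) ∧
    ∫ t in Ioi (0 : ℝ), QQ σ t * rexp (s * (-t)) =
      1 / s * ∑' p : Nat.Primes, aP σ p * ((p : ℕ) : ℝ) ^ (-s) := by
  have hs0 : -s < 0 := by linarith
  constructor
  · set s' := (1 + s) / 2 with hs'
    have h1 : 1 < s' := by simp only [hs']; linarith
    have h2 : s' - s < 0 := by simp only [hs']; linarith
    refine Integrable.mono' ((integrableOn_exp_mul_Ioi h2 0).const_mul
      (∑' p : Nat.Primes, aP σ p * ((p : ℕ) : ℝ) ^ (-s'))) ?_ ?_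
    · have := (QQ_mono hσ).measurable
      exact Measurable.aestronglyMeasurable (by fun_prop)
    · refine Eventually.of_forall fun t => ?_
      rw [Real.norm_of_nonneg (mul_nonneg (QQ_nonneg hσ t) (exp_pos _).le)]
      refine (mul_le_mul_of_nonneg_right (QQ_le hσ h1 t) (exp_pos _).le).trans_eq ?_
      rw [mul_assoc, ← Real.exp_add]
      ring_nf
  · set F : Nat.Primes → ℝ → ℝ := fun p t =>
      (Ici (Real.log (p : ℕ))).indicator (fun t => aP σ p * rexp (-s * t)) t with hF
    have hFQ : ∀ t, QQ σ t * rexp (s * (-t)) = ∑' p, F p t := by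
      intro t
      rw [QQ, ← tsum_mul_right]
      apply tsum_congr
      intro p
      simp only [hF, indicator, mem_Ici]
      split_ifs
      · ring_nf
      · simp
    have hlog : ∀ p : Nat.Primes, 0 < Real.log (p : ℕ) := fun p =>
      Real.log_pos (by exact_mod_cast p.2.one_lt)
    have hFi : ∀ p, Integrable (F p) (volume.restrict (Ioi 0)) := by
      intro p
      exact ((integrableOn_exp_mul_Ioi hs0 0).const_mul _).indicator measurableSet_Ici
    have hFint : ∀ p, ∫ t in Ioi (0 : ℝ), F p t = 1 / s * (aP σ p * ((p : ℕ) : ℝ) ^ (-s)) := by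
      intro p
      rw [setIntegral_indicator measurableSet_Ici,
        show Ioi (0 : ℝ) ∩ Ici (Real.log (p : ℕ)) = Ici (Real.log (p : ℕ)) from
          inter_eq_right.2 fun x hx => (hlog p).trans_le hx, integral_Ici_eq_integral_Ioi,
        integral_const_mul, integral_exp_mul_Ioi hs0, exp_log_prime]
      have : s ≠ 0 := by linarith
      field_simp
    have hnn : ∀ p t, 0 ≤ F p t := fun p t =>
      indicator_nonneg (fun t _ => mul_nonneg (aP_nonneg hσ p.2) (exp_pos _).le) t
    simp_rw [hFQ]
    rw [← (hasSum_integral_of_summable_integral_norm hFi ?_).tsum_eq, ← tsum_mul_left]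
    · exact tsum_congr hFint
    · simp_rw [Real.norm_of_nonneg (hnn _ _), hFint]
      exact (summable_aP hσ hs).mul_left _



lemma zeta1_pos {w : ℝ} (hw0 : 0 < w) : ∃ z : ℝ, 0 < z ∧ riemannZeta₁ w = z := by
  rcases lt_trichotomy w 1 with h | h | h
  · exact zeta1_pos_Ioo hw0 h
  · refine ⟨1, one_pos, ?_⟩
    rw [h]; simp [riemannZeta₁_one]
  · obtain ⟨z, hz, h1, _⟩ := EE_real (σ := (w - 1) / 2) (by linarith) (s := (1 + w) / 2) (by linarith)
    refine ⟨(w - 1) * z, mul_pos (by linarith) hz, ?_⟩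
    have e : (((1 + w) / 2 : ℝ) : ℂ) + ((w - 1) / 2 : ℝ) = w := by push_cast; ring
    rw [e] at h1
    have hne : (w : ℂ) ≠ 1 := by exact_mod_cast h.ne'
    have hne' : (w : ℂ) - 1 ≠ 0 := sub_ne_zero.2 hne
    rw [riemannZeta_eq_inv_sub_mul hne] at h1
    push_cast
    rw [← h1]
    field_simp

theorem omega_res {σ β : ℝ} (hσ : 0 < σ) (hβ : 0 < β) (hβ2 : 1 - 2 * σ < β)
    {z : ℂ} (hz : riemannZeta z = 0) (hz1 : z.re < 1) (hzβ : β + σ < z.re) (T : ℝ) :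
    ∃ t ≥ T, QQ σ t - II ((1 - σ) * t) < -rexp (β * t) := by
  by_contra! hcon
  set κ := 1 - σ with hκd
  have hκ : 0 < κ := by simp only [hκd]; linarith
  set T' := max T 0 with hT'
  set C := 1 + II (κ * T') with hC
  have hT0 : 0 ≤ T' := le_max_right _ _
  have hC1 : 1 ≤ C := by linarith [II_nonneg (mul_nonneg hκ.le hT0)]
  set f : ℝ → ℝ := fun t => QQ σ t - II (κ * t) + C * rexp (β * t) with hf
  have hImono : Monotone II := monotone_of_deriv_nonneg (fun x => (II_hasDeriv x).differentiableAt)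
    fun x => by rw [(II_hasDeriv x).deriv]; exact gg_nonneg x
  have hf0 : ∀ t, 0 ≤ t → 0 ≤ f t := by
    intro t ht
    have he : 1 ≤ rexp (β * t) := Real.one_le_exp (by positivity)
    simp only [hf]
    rcases le_total T t with h | h
    · have := hcon t h
      nlinarith
    · have h1 : II (κ * t) ≤ II (κ * T') := hImono (by
        have : t ≤ T' := h.trans (le_max_left _ _)
        nlinarith)
      have := QQ_nonneg hσ t
      nlinarith
  have hfm : Measurable f := by
    have h1 := (QQ_mono hσ).measurable
    have h2 := II_cont.measurable
    fun_prop
  set f' : ℝ → ℝ := fun t => max (f t) 0 with hf'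
  have hf'm : Measurable f' := hfm.max measurable_const
  have hf'0 : ∀ t, 0 ≤ f' t := fun t => le_max_right _ _
  set μ : Measure ℝ := (volume.restrict (Ioi 0)).withDensity fun x => ENNReal.ofReal (f' x) with hμd
  have hμ : ∀ᵐ t ∂μ, 0 ≤ t := by
    refine (withDensity_absolutelyContinuous _ _).ae_le ?_
    filter_upwards [ae_restrict_mem measurableSet_Ioi] with t ht using le_of_lt ht
  have hcongr : ∀ s : ℝ, ∀ t ∈ Ioi (0 : ℝ), f' t * rexp (s * (-t)) =
      QQ σ t * rexp (s * (-t)) - II (κ * t) * rexp (s * (-t)) + C * rexp ((β - s) * t) := by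
    intro s t ht
    have e : rexp ((β - s) * t) = rexp (β * t) * rexp (s * (-t)) := by
      rw [← Real.exp_add]; ring_nf
    simp only [hf', max_eq_left (hf0 t (le_of_lt ht)), e]
    simp only [hf]
    ring
  have hint : ∀ s : ℝ, 1 < s → s ∈ integrableExpSet (fun t : ℝ => -t) μ := by
    intro s hs
    show Integrable _ _
    rw [hμd, dens_integrable hf'm hf'0]
    refine Integrable.congr (((trans_Q hσ hs).1.sub (trans_A hκ (s := s) (by linarith)).1).add
      ((integrableOn_exp_mul_Ioi (show β - s < 0 by linarith) 0).const_mul C)) ?_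
    filter_upwards [ae_restrict_mem measurableSet_Ioi] with t ht
    rw [hcongr s t ht]
    rfl
  have hmgf : ∀ s : ℝ, 1 < s → mgf (fun t : ℝ => -t) μ s =
      1 / s * (∑' p : Nat.Primes, aP σ p * ((p : ℕ) : ℝ) ^ (-s)) - 1 / s * Real.log (s / (s - κ))
        + C * (1 / (s - β)) := by
    intro s hs
    rw [mgf, hμd, dens_integral hf'm hf'0, setIntegral_congr_fun measurableSet_Ioi (hcongr s),
      integral_add, integral_sub, (trans_Q hσ hs).2, (trans_A hκ (s := s) (by linarith)).2,
      integral_const_mul, integral_exp_Ioi0 (by linarith)]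
    · congr 2
      rw [← neg_sub s β, neg_div_neg_eq]
    · exact (trans_Q hσ hs).1
    · exact (trans_A hκ (s := s) (by linarith)).1
    · exact (trans_Q hσ hs).1.sub (trans_A hκ (s := s) (by linarith)).1
    · exact (integrableOn_exp_mul_Ioi (show β - s < 0 by linarith) 0).const_mul C
  set H : Set ℂ := {s : ℂ | β < s.re} with hH
  have hHo : IsOpen H := isOpen_lt continuous_const Complex.continuous_re
  have hHne : ∀ s ∈ H, s ≠ 0 := by
    rintro s hs rfl
    simp only [hH, mem_ofPred_eq, Complex.zero_re] at hs
    linarith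
  have hHne' : ∀ s ∈ H, s - β ≠ 0 := by
    rintro s hs h
    have : s = β := sub_eq_zero.1 h
    simp [hH, this] at hs
  set q : ℂ → ℂ := fun s => riemannZeta₁ (s + σ) / s with hq
  have hqd : DifferentiableOn ℂ q H := by
    have := differentiable_riemannZeta₁
    intro s hs
    refine DifferentiableAt.differentiableWithinAt ?_
    refine DifferentiableAt.div (by fun_prop) (by fun_prop) (hHne s hs)
  have hEd : DifferentiableOn ℂ (EE σ) H := EE_diff hσ hβ hβ2
  set U := H ∩ q ⁻¹' Complex.slitPlane with hU
  have hUo : IsOpen U := hqd.continuousOn.isOpen_inter_preimage hHo Complex.isOpen_slitPlane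
  set G : ℂ → ℂ := fun s => C * (1 / (s - β)) + 1 / s * (Complex.log (q s) + EE σ s) with hG
  have hGd : DifferentiableOn ℂ G U := by
    intro s hs
    have h1 : DifferentiableWithinAt ℂ q U s := (hqd s hs.1).mono inter_subset_left
    have h2 : DifferentiableWithinAt ℂ (EE σ) U s := (hEd s hs.1).mono inter_subset_left
    refine DifferentiableWithinAt.add ?_ (DifferentiableWithinAt.mul ?_ ((h1.clog hs.2).add h2))
    · exact (differentiableWithinAt_const _).mul
        ((differentiableWithinAt_const _).div (by fun_prop) (hHne' s hs.1))
    · exact (differentiableWithinAt_const _).div (by fun_prop) (hHne s hs.1)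
  have hqpos : ∀ s : ℝ, β < s → ∃ r : ℝ, 0 < r ∧ q s = r := by
    intro s hs
    obtain ⟨r, hr, h⟩ := zeta1_pos (w := s + σ) (by linarith)
    refine ⟨r / s, div_pos hr (by linarith), ?_⟩
    simp only [hq]
    rw [← Complex.ofReal_add, h]
    push_cast; rfl
  have hUr : ∀ s : ℝ, β < s → (s : ℂ) ∈ U := by
    intro s hs
    obtain ⟨r, hr, h⟩ := hqpos s hs
    refine ⟨by simpa [hH] using hs, ?_⟩
    simp only [mem_preimage, h]
    exact Complex.ofReal_mem_slitPlane.2 hr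
  have heq : ∀ s : ℝ, 2 < s → G s = ((mgf (fun t : ℝ => -t) μ s : ℝ) : ℂ) := by
    intro s hs
    rw [hmgf s (by linarith)]
    obtain ⟨r, hr, hr1, hr2⟩ := EE_real hσ (s := s) (by linarith)
    have hs0 : 0 < s := by linarith
    have hsk : 0 < s - κ := by linarith
    have e1 : q s = (((s - κ) * r / s : ℝ) : ℂ) := by
      simp only [hq]
      have hne : (s : ℂ) + σ ≠ 1 := by
        rw [← Complex.ofReal_add]
        exact_mod_cast (show s + σ ≠ 1 by linarith)
      have hne' := sub_ne_zero.2 hne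
      rw [riemannZeta_eq_inv_sub_mul hne] at hr1
      push_cast
      rw [← hr1, hκd]
      push_cast
      field_simp
      ring
    simp only [hG]
    rw [e1, ← Complex.ofReal_log (by positivity)]
    push_cast at hr2 ⊢
    rw [hr2]
    have e2 : Real.log ((s - κ) * r / s) = Real.log r - Real.log (s / (s - κ)) := by
      rw [Real.log_div (by positivity) hs0.ne', Real.log_mul hsk.ne' hr.ne',
        Real.log_div hs0.ne' hsk.ne']
      ring
    rw [e2]
    push_cast
    ring
  have hland := landau μ hμ β 2 (hint 2 one_lt_two) U hUo G hGd hUr heq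
  have hSi : Ioi β ⊆ interior (integrableExpSet (fun t : ℝ => -t) μ) :=
    interior_maximal hland isOpen_Ioi
  have hF : DifferentiableOn ℂ (complexMGF (fun t : ℝ => -t) μ) H :=
    differentiableOn_complexMGF.mono fun s hs => hSi hs
  have hpre : IsPreconnected H := (convex_halfSpace_re_gt β).isPreconnected
  have hL : DifferentiableOn ℂ (fun s => s * Complex.exp (s * (complexMGF (fun t : ℝ => -t) μ s
      - C * (1 / (s - β))))) H := by
    have : DifferentiableOn ℂ (fun s : ℂ => C * (1 / (s - β))) H := by
      intro s hs
      exact (differentiableWithinAt_const _).mul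
        ((differentiableWithinAt_const _).div (by fun_prop) (hHne' s hs))
    fun_prop
  have hR : DifferentiableOn ℂ (fun s => riemannZeta₁ (s + σ) * Complex.exp (EE σ s)) H := by
    have := differentiable_riemannZeta₁
    have h2 : DifferentiableOn ℂ (fun s : ℂ => riemannZeta₁ (s + σ)) H :=
      Differentiable.differentiableOn (by fun_prop)
    fun_prop
  have hβ1 : β < 3 := by linarith
  have hid := (hL.analyticOnNhd hHo).eqOn_of_preconnected_of_frequently_eq
    (hR.analyticOnNhd hHo) hpre (z₀ := ((3 : ℝ) : ℂ)) (by simpa [hH] using hβ1)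
    (frequently_of_real (a := 2) (by norm_num) fun s hs => by
      obtain ⟨r, hr, h⟩ := hqpos s (by linarith)
      have hs0 : (s : ℂ) ≠ 0 := by exact_mod_cast (show s ≠ 0 by linarith)
      have e1 : (s : ℂ) * (complexMGF (fun t : ℝ => -t) μ s - C * (1 / (s - β))) =
          Complex.log (q s) + EE σ s := by
        rw [complexMGF_ofReal, ← heq s hs]
        simp only [hG]
        field_simp
        ring
      rw [e1, Complex.exp_add, Complex.exp_log (by rw [h]; exact_mod_cast hr.ne')]
      simp only [hq]
      field_simp)
  have hzH : z - σ ∈ H := by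
    simp only [hH, mem_ofPred_eq, Complex.sub_re, Complex.ofReal_re]
    linarith
  have hfin := hid hzH
  have hz1' : z ≠ 1 := by rintro rfl; simp at hz1
  have hzz : riemannZeta₁ z = 0 := by
    rw [riemannZeta_eq_inv_sub_mul hz1'] at hz
    rcases mul_eq_zero.1 hz with h | h
    · exact absurd (inv_eq_zero.1 h) (sub_ne_zero.2 hz1')
    · exact h
  simp only [sub_add_cancel, hzz, zero_mul] at hfin
  rcases mul_eq_zero.1 hfin with h | h
  · exact hHne _ hzH h
  · exact Complex.exp_ne_zero _ h



structure Dick (r : ℝ → ℝ) : Prop where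
  cont : Continuous r
  one : ∀ t ≤ 1, r t = 1
  eq : ∀ t ≥ (1 : ℝ), r t = 1 - ∫ v in (1 : ℝ)..t, r (v - 1) / v

lemma dick_of {ρ : ℝ → ℝ} (hρ_cont : ContinuousOn ρ (Set.Ici 0))
    (hρ_one : ∀ t ∈ Set.Icc (0 : ℝ) 1, ρ t = 1)
    (hρ_eq : ∀ t ≥ (1 : ℝ), ρ t = 1 - ∫ v in (1 : ℝ)..t, ρ (v - 1) / v) :
    Dick (fun v => ρ (max v 0)) := by
  refine ⟨?_, ?_, ?_⟩
  · exact hρ_cont.comp_continuous (by fun_prop) fun x => mem_Ici.2 (le_max_right _ _)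
  · intro t ht
    exact hρ_one _ ⟨le_max_right _ _, max_le ht zero_le_one⟩
  · intro t ht
    rw [max_eq_left (by linarith), hρ_eq t ht]
    congr 1
    apply intervalIntegral.integral_congr
    intro v hv
    rw [uIcc_of_le ht] at hv
    simp only
    rw [max_eq_left (by linarith [hv.1])]

namespace Dick
variable {r : ℝ → ℝ}

lemma intg (D : Dick r) (a b : ℝ) : IntervalIntegrable r volume a b := D.cont.intervalIntegrable a b

lemma intg2 (D : Dick r) {a b : ℝ} (ha : 1 ≤ a) (hb : 1 ≤ b) :
    IntervalIntegrable (fun v => r (v - 1) / v) volume a b := by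
  apply ContinuousOn.intervalIntegrable
  refine ContinuousOn.div ?_ continuousOn_id ?_
  · exact (D.cont.comp (by fun_prop)).continuousOn
  · intro x hx
    have : 1 ≤ x := by
      rcases le_total a b with h | h
      · rw [uIcc_of_le h] at hx; linarith [hx.1]
      · rw [uIcc_of_ge h] at hx; linarith [hx.1]
    linarith

lemma deriv_right (D : Dick r) {v : ℝ} (hv : 1 ≤ v) : HasDerivWithinAt r (-(r (v - 1) / v)) (Ici v) v := by
  have hc : ContinuousAt (fun v => r (v - 1) / v) v := by
    refine ContinuousAt.div ?_ continuousAt_id (by linarith)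
    exact (D.cont.comp (by fun_prop : Continuous fun v : ℝ => v - 1)).continuousAt
  have hm : Measurable (fun v => r (v - 1) / v) := by
    have := D.cont.measurable
    fun_prop
  have h1 : HasDerivAt (fun t => 1 - ∫ v in (1 : ℝ)..t, r (v - 1) / v) (-(r (v - 1) / v)) v := by
    have := (intervalIntegral.integral_hasDerivAt_right (D.intg2 le_rfl hv)
      hm.stronglyMeasurable.stronglyMeasurableAtFilter hc).const_sub 1
    exact this
  exact h1.hasDerivWithinAt.congr (fun x hx => D.eq x (le_trans hv hx)) (D.eq v hv)

lemma window (D : Dick r) {v : ℝ} (hv : 1 ≤ v) : v * r v = ∫ u in (v - 1)..v, r u := by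
  set P : ℝ → ℝ := fun v => ∫ u in (0 : ℝ)..v, r u with hP
  have hPd : ∀ x, HasDerivAt P (r x) x := fun x =>
    intervalIntegral.integral_hasDerivAt_right (D.intg _ _)
      (D.cont.stronglyMeasurableAtFilter _ _) D.cont.continuousAt
  have hPc : Continuous P := continuous_iff_continuousAt.2 fun x => (hPd x).continuousAt
  have hPs : ∀ v, ∫ u in (v - 1)..v, r u = P v - P (v - 1) := fun v => by
    simp only [hP]
    rw [intervalIntegral.integral_interval_sub_left (D.intg _ _) (D.intg _ _)]
  have hconst := constant_of_has_deriv_right_zero (f := fun v => v * r v - (P v - P (v - 1)))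
    (a := 1) (b := v) (by have := D.cont; fun_prop) (fun x hx => by
      have hx1 : 1 ≤ x := hx.1
      have h1 := (hasDerivWithinAt_id x (Ici x)).mul (D.deriv_right hx1)
      have h2 := (hPd x).hasDerivWithinAt (s := Ici x)
      have h3 : HasDerivAt (fun v => P (v - 1)) (r (x - 1)) x := by
        have := (hPd (x - 1)).comp x ((hasDerivAt_id x).sub_const 1)
        simpa [Function.comp_def] using this
      have h4 := h1.sub (h2.sub h3.hasDerivWithinAt)
      have hx0 : x ≠ 0 := by linarith
      have e : 1 * r x + id x * -(r (x - 1) / x) - (r x - r (x - 1)) = 0 := by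
        simp only [id_eq]
        field_simp
        ring
      rw [e] at h4
      exact h4) v ⟨hv, le_rfl⟩
  have h1 : P 1 = 1 := by
    simp only [hP]
    have : ∫ u in (0 : ℝ)..1, r u = ∫ u in (0 : ℝ)..1, (1 : ℝ) := by
      apply intervalIntegral.integral_congr
      intro u hu
      rw [uIcc_of_le zero_le_one] at hu
      exact D.one u hu.2
    rw [this]; simp
  have h0 : P 0 = 0 := by simp [hP]
  simp only [D.one 1 le_rfl, sub_self, h1, h0] at hconst
  rw [hPs]
  linarith

lemma pos (D : Dick r) (v : ℝ) : 0 < r v := by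
  by_contra! hneg
  set S : Set ℝ := {v | r v ≤ 0} with hS
  have hcl : IsClosed S := isClosed_le D.cont continuous_const
  have hlow : ∀ x ∈ S, 1 ≤ x := by
    intro x hx
    by_contra! h
    have h1 : r x ≤ 0 := hx
    rw [D.one x h.le] at h1
    linarith
  have hbd : BddBelow S := ⟨1, hlow⟩
  have hmem := hcl.csInf_mem ⟨v, hneg⟩ hbd
  set w := sInf S with hw
  have hw1 := hlow w hmem
  have h1 := D.window hw1
  have h2 : 0 < ∫ u in (w - 1)..w, r u := by
    apply intervalIntegral.intervalIntegral_pos_of_pos_on (D.intg _ _) _ (by linarith)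
    intro x hx
    by_contra! hx0
    have := csInf_le hbd (show x ∈ S from hx0)
    linarith [hx.2]
  have h3 : r w ≤ 0 := hmem
  nlinarith

lemma anti (D : Dick r) : Antitone r := by
  have h1 : ∀ v, r v = 1 - ∫ u in (1 : ℝ)..(max v 1), r (u - 1) / u := by
    intro v
    rw [← D.eq _ (le_max_right _ _)]
    rcases le_total v 1 with h | h
    · rw [max_eq_right h, D.one v h, D.one 1 le_rfl]
    · rw [max_eq_left h]
  intro a b hab
  rw [h1 a, h1 b]
  have ha : 1 ≤ max a 1 := le_max_right _ _
  have hm : max a 1 ≤ max b 1 := max_le_max_right 1 hab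
  have h2 := intervalIntegral.integral_add_adjacent_intervals (D.intg2 le_rfl ha)
    (D.intg2 ha (ha.trans hm))
  have h3 : 0 ≤ ∫ u in (max a 1)..(max b 1), r (u - 1) / u := by
    apply intervalIntegral.integral_nonneg hm
    intro u hu
    exact div_nonneg (D.pos _).le (by linarith [hu.1])
  linarith

lemma le_one (D : Dick r) (v : ℝ) : r v ≤ 1 := by
  rcases le_total v 1 with h | h
  · exact (D.one v h).le
  · have := D.anti h
    rwa [D.one 1 le_rfl] at this

lemma step (D : Dick r) {v : ℝ} (hv : 1 ≤ v) : v * r v ≤ r (v - 1) := by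
  rw [D.window hv]
  have : ∫ u in (v - 1)..v, r u ≤ ∫ u in (v - 1)..v, r (v - 1) := by
    apply intervalIntegral.integral_mono_on (by linarith) (D.intg _ _)
    · exact intervalIntegrable_const
    · intro x hx
      exact D.anti hx.1
  simpa using this

lemma decay (D : Dick r) {ξ : ℝ} (hξ : 0 ≤ ξ) (v : ℝ) : r v ≤ rexp (ξ * (rexp ξ + 1)) * rexp (-ξ * v) := by
  have key : ∀ n : ℕ, ∀ v : ℝ, v ≤ n → r v ≤ rexp (ξ * (rexp ξ + 1)) * rexp (-ξ * v) := by
    have hsmall : ∀ v : ℝ, v ≤ rexp ξ + 1 → r v ≤ rexp (ξ * (rexp ξ + 1)) * rexp (-ξ * v) := by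
      intro v hv
      rw [← Real.exp_add]
      refine (D.le_one v).trans (Real.one_le_exp ?_)
      nlinarith
    intro n
    induction n with
    | zero =>
      intro v hv
      apply hsmall
      have := exp_pos ξ
      push_cast at hv
      linarith
    | succ n ih =>
      intro v hv
      rcases le_total v (rexp ξ + 1) with h | h
      · exact hsmall v h
      · have h1 := ih (v - 1) (by push_cast at hv; linarith)
        have he := exp_pos ξ
        have h2 := D.step (v := v) (by linarith)
        have h3 : rexp ξ * r v ≤ v * r v := mul_le_mul_of_nonneg_right (by linarith) (D.pos v).le
        have h4 : rexp (-ξ * (v - 1)) = rexp ξ * rexp (-ξ * v) := by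
          rw [← Real.exp_add]; ring_nf
        rw [h4] at h1
        have h5 : rexp ξ * r v ≤ rexp ξ * (rexp (ξ * (rexp ξ + 1)) * rexp (-ξ * v)) := by
          nlinarith
        exact le_of_mul_le_mul_left h5 he
  obtain ⟨n, hn⟩ := exists_nat_ge v
  exact key n v hn

end Dick



namespace Dick
variable {r : ℝ → ℝ}

lemma exp_int (D : Dick r) (ξ : ℝ) : IntegrableOn (fun v => r v * rexp (ξ * v)) (Ioi 0) := by
  set ξ' := max ξ 0 + 1 with hξ'
  have h0 : 0 ≤ ξ' := by have := le_max_right ξ 0; linarith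
  have h1 : ξ - ξ' < 0 := by have := le_max_left ξ 0; linarith
  refine Integrable.mono' ((integrableOn_exp_mul_Ioi h1 0).const_mul (rexp (ξ' * (rexp ξ' + 1)))) ?_ ?_
  · have := D.cont
    exact Continuous.aestronglyMeasurable (by fun_prop)
  · refine Eventually.of_forall fun v => ?_
    rw [Real.norm_of_nonneg (mul_nonneg (D.pos v).le (exp_pos _).le)]
    refine (mul_le_mul_of_nonneg_right (D.decay h0 v) (exp_pos _).le).trans_eq ?_
    rw [mul_assoc, ← Real.exp_add]
    ring_nf

lemma window' (D : Dick r) {v : ℝ} (hv : 0 < v) :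
    v * r v = ∫ a in Ioc (0 : ℝ) 1, (Ici (0 : ℝ)).indicator r (v - a) := by
  rw [← intervalIntegral.integral_of_le zero_le_one,
    intervalIntegral.integral_comp_sub_left (fun u => (Ici (0 : ℝ)).indicator r u) v, sub_zero]
  rcases le_or_gt 1 v with h | h
  · rw [D.window h]
    apply intervalIntegral.integral_congr
    intro u hu
    rw [uIcc_of_le (by linarith)] at hu
    rw [indicator_of_mem (show u ∈ Ici (0 : ℝ) from le_trans (by linarith) hu.1)]
  · rw [D.one v h.le, intervalIntegral.integral_of_le (by linarith),
      setIntegral_indicator measurableSet_Ici,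
      show Ioc (v - 1) v ∩ Ici (0 : ℝ) = Icc 0 v by
        ext x
        simp only [mem_inter_iff, mem_Ioc, mem_Ici, mem_Icc]
        constructor
        · rintro ⟨⟨_, h1⟩, h2⟩; exact ⟨h2, h1⟩
        · rintro ⟨h1, h2⟩
          exact ⟨⟨by linarith, h2⟩, h1⟩,
      setIntegral_congr_fun (g := fun _ => (1 : ℝ)) measurableSet_Icc (fun x hx => D.one x (hx.2.trans h.le))]
    simp [hv.le]

noncomputable def MM (r : ℝ → ℝ) (ξ : ℝ) : ℝ := ∫ v in Ioi (0 : ℝ), r v * rexp (ξ * v)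

lemma conv (D : Dick r) (ξ : ℝ) :
    ∫ v in Ioi (0 : ℝ), r v * (v * rexp (ξ * v)) = gg ξ * MM r ξ := by
  set μ : Measure ℝ := volume.restrict (Ioi 0) with hμ
  set ν : Measure ℝ := volume.restrict (Ioc 0 1) with hν
  set F : ℝ → ℝ → ℝ := fun v a => (Ici (0 : ℝ)).indicator r (v - a) * rexp (ξ * v) with hF
  have hA : ∀ v ∈ Ioi (0 : ℝ), r v * (v * rexp (ξ * v)) = ∫ a, F v a ∂ν := by
    intro v hv
    simp only [hF]
    rw [integral_mul_const, ← D.window' hv]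
    ring
  have hind : Measurable ((Ici (0 : ℝ)).indicator r) := D.cont.measurable.indicator measurableSet_Ici
  have hmeas : Measurable (Function.uncurry F) := by
    simp only [hF, Function.uncurry_def]
    fun_prop
  set ξ' := max ξ 0 + 1 with hξ'
  have h0 : 0 ≤ ξ' := by have := le_max_right ξ 0; linarith
  have h1 : ξ - ξ' < 0 := by have := le_max_left ξ 0; linarith
  have hint : Integrable (Function.uncurry F) (μ.prod ν) := by
    have hi : Integrable (fun v => rexp (ξ' * (rexp ξ' + 1)) * rexp ξ' * rexp ((ξ - ξ') * v)) μ :=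
      (integrableOn_exp_mul_Ioi h1 0).const_mul _
    refine (hi.comp_fst ν).mono' hmeas.aestronglyMeasurable ?_
    rw [hμ, hν, Measure.prod_restrict]
    filter_upwards [ae_restrict_mem (measurableSet_Ioi.prod measurableSet_Ioc)] with x hx
    obtain ⟨v, a⟩ := x
    obtain ⟨hv, ha⟩ := hx
    simp only [mem_Ioi, mem_Ioc] at hv ha
    simp only [Function.uncurry_apply_pair, hF]
    rw [Real.norm_of_nonneg (mul_nonneg (indicator_nonneg (fun x _ => (D.pos x).le) _) (exp_pos _).le)]
    have h2 : (Ici (0 : ℝ)).indicator r (v - a) ≤ rexp (ξ' * (rexp ξ' + 1)) * rexp (-ξ' * (v - a)) := by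
      refine (indicator_le_self' (fun x _ => (D.pos x).le) _).trans (D.decay h0 _)
    have h3 : rexp (-ξ' * (v - a)) * rexp (ξ * v) ≤ rexp ξ' * rexp ((ξ - ξ') * v) := by
      rw [← Real.exp_add, ← Real.exp_add]
      apply exp_le_exp.2
      nlinarith [ha.2]
    refine (mul_le_mul_of_nonneg_right h2 (exp_pos _).le).trans ?_
    rw [mul_assoc, mul_assoc]
    exact mul_le_mul_of_nonneg_left h3 (exp_pos _).le
  rw [setIntegral_congr_fun measurableSet_Ioi hA, integral_integral_swap hint]
  have h2 : ∀ a ∈ Ioc (0 : ℝ) 1, ∫ v, F v a ∂μ = rexp (ξ * a) * MM r ξ := by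
    intro a ha
    have e1 : ∫ v, F v a ∂μ = ∫ v, F v a := by
      rw [hμ]
      apply setIntegral_eq_integral_of_forall_compl_eq_zero
      intro v hv
      simp only [mem_Ioi, not_lt] at hv
      simp only [hF]
      rw [indicator_of_notMem, zero_mul]
      simp only [mem_Ici, not_le]
      linarith [ha.1]
    have e2 : ∫ v, F v a = ∫ u, (Ici (0 : ℝ)).indicator (fun u => rexp (ξ * a) * (r u * rexp (ξ * u))) u := by
      rw [← integral_sub_right_eq_self
        ((Ici (0 : ℝ)).indicator (fun u => rexp (ξ * a) * (r u * rexp (ξ * u)))) a]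
      congr 1
      ext v
      simp only [hF, indicator]
      split_ifs
      · have : rexp (ξ * v) = rexp (ξ * a) * rexp (ξ * (v - a)) := by
          rw [← Real.exp_add]; ring_nf
        rw [this]; ring
      · simp
    rw [e1, e2, integral_indicator measurableSet_Ici, integral_Ici_eq_integral_Ioi, integral_const_mul]
    rfl
  rw [setIntegral_congr_fun measurableSet_Ioc h2, integral_mul_const,
    ← intervalIntegral.integral_of_le zero_le_one]
  rfl

lemma MM_eq (D : Dick r) (ξ : ℝ) : MM r ξ = MM r 0 * rexp (II ξ) := by
  set μ : Measure ℝ := (volume.restrict (Ioi 0)).withDensity fun x => ENNReal.ofReal (r x) with hμ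
  have hm := D.cont.measurable
  have h0 : ∀ x, 0 ≤ r x := fun x => (D.pos x).le
  have hS : integrableExpSet (fun v : ℝ => v) μ = univ := by
    refine eq_univ_of_forall fun s => ?_
    show Integrable _ _
    rw [hμ, dens_integrable hm h0]
    exact D.exp_int s
  have hmgf : ∀ s, mgf (fun v : ℝ => v) μ s = MM r s := by
    intro s
    rw [mgf, hμ, dens_integral hm h0]
    rfl
  have hd : ∀ s, HasDerivAt (MM r) (gg s * MM r s) s := by
    intro s
    have := hasDerivAt_mgf (X := fun v : ℝ => v) (μ := μ) (t := s) (by rw [hS]; simp)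
    rw [hμ, dens_integral hm h0, D.conv s, ← hμ] at this
    rwa [show mgf (fun v : ℝ => v) μ = MM r from funext hmgf] at this
  have hd2 : ∀ s, HasDerivAt (fun s => MM r s * rexp (-II s)) 0 s := by
    intro s
    have := (hd s).mul ((II_hasDeriv s).neg.exp)
    rw [show gg s * MM r s * rexp ((-II) s) + MM r s * (rexp ((-II) s) * -gg s) = 0 by ring] at this
    exact this
  have := is_const_of_deriv_eq_zero (fun s => (hd2 s).differentiableAt) (fun s => (hd2 s).deriv) ξ 0
  simp only [show II 0 = 0 by simp [II], neg_zero, Real.exp_zero, mul_one] at this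
  rw [← this, mul_assoc, ← Real.exp_add]
  simp

lemma MM_pos (D : Dick r) (ξ : ℝ) : 0 < MM r ξ := by
  unfold MM
  rw [setIntegral_pos_iff_support_of_nonneg_ae]
  · have : Function.support (fun v => r v * rexp (ξ * v)) = univ :=
      eq_univ_of_forall fun v => (mul_pos (D.pos v) (exp_pos _)).ne'
    rw [this]
    simp
  · exact Eventually.of_forall fun v => (mul_pos (D.pos v) (exp_pos _)).le
  · exact D.exp_int ξ

lemma exists_v (D : Dick r) (ξ : ℝ) : ∃ v > 0, II ξ - II (ξ - 1) - 2 ≤ v ∧ v ≤ II (ξ + 1) - II ξ + 2 ∧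
    MM r 0 * rexp (II ξ) / (2 * (II (ξ + 1) - II ξ + 2)) ≤ r v * rexp (ξ * v) := by
  by_contra! hcon
  have hImono : Monotone II := monotone_of_deriv_nonneg (fun x => (II_hasDeriv x).differentiableAt)
    fun x => by rw [(II_hasDeriv x).deriv]; exact gg_nonneg x
  set V := II (ξ + 1) - II ξ + 2 with hV
  set v0 := II ξ - II (ξ - 1) - 2 with hv0
  have hVpos : 0 < V := by
    have := hImono (show ξ ≤ ξ + 1 by linarith)
    linarith
  have hM := D.MM_pos ξ
  have hb : ∀ v ∈ Ioi (0 : ℝ), r v * rexp (ξ * v) ≤ rexp (-V) * (r v * rexp ((ξ + 1) * v)) +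
      rexp v0 * (r v * rexp ((ξ - 1) * v)) + (Ioc 0 V).indicator (fun _ => MM r ξ / (2 * V)) v := by
    intro v hv
    have p1 : 0 ≤ rexp (-V) * (r v * rexp ((ξ + 1) * v)) := by have := D.pos v; positivity
    have p2 : 0 ≤ rexp v0 * (r v * rexp ((ξ - 1) * v)) := by have := D.pos v; positivity
    have p3 : 0 ≤ (Ioc 0 V).indicator (fun _ => MM r ξ / (2 * V)) v :=
      indicator_nonneg (fun _ _ => by positivity) v
    rcases lt_or_ge V v with h | h
    · have : r v * rexp (ξ * v) ≤ rexp (-V) * (r v * rexp ((ξ + 1) * v)) := by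
        rw [mul_left_comm, ← Real.exp_add]
        exact mul_le_mul_of_nonneg_left (exp_le_exp.2 (by linarith)) (D.pos v).le
      linarith
    · rcases lt_or_ge v v0 with h' | h'
      · have : r v * rexp (ξ * v) ≤ rexp v0 * (r v * rexp ((ξ - 1) * v)) := by
          rw [mul_left_comm, ← Real.exp_add]
          exact mul_le_mul_of_nonneg_left (exp_le_exp.2 (by linarith)) (D.pos v).le
        linarith
      · have := hcon v hv h' h
        rw [indicator_of_mem (show v ∈ Ioc 0 V from ⟨hv, h⟩)]
        rw [← D.MM_eq ξ] at this
        linarith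
  have i1 := (D.exp_int (ξ + 1)).const_mul (rexp (-V))
  have i2 := (D.exp_int (ξ - 1)).const_mul (rexp v0)
  have i3 : IntegrableOn ((Ioc 0 V).indicator (fun _ => MM r ξ / (2 * V))) (Ioi 0) := by
    apply Integrable.integrableOn
    rw [integrable_indicator_iff measurableSet_Ioc]
    exact integrableOn_const (by simp)
  have hle := setIntegral_mono_on (D.exp_int ξ) ((i1.add i2).add i3) measurableSet_Ioi hb
  rw [integral_add' (i1.add i2) i3, integral_add' i1 i2, integral_const_mul, integral_const_mul,
    setIntegral_indicator measurableSet_Ioc,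
    show Ioi (0 : ℝ) ∩ Ioc 0 V = Ioc 0 V from inter_eq_right.2 fun x hx => hx.1] at hle
  change MM r ξ ≤ rexp (-V) * MM r (ξ + 1) + rexp v0 * MM r (ξ - 1) + _ at hle
  have e1 : rexp (-V) * MM r (ξ + 1) = rexp (-2) * MM r ξ := by
    rw [D.MM_eq (ξ + 1), D.MM_eq ξ, mul_left_comm, mul_left_comm (rexp (-2)), ← Real.exp_add, ← Real.exp_add]
    congr 2
    rw [hV]; ring
  have e2 : rexp v0 * MM r (ξ - 1) = rexp (-2) * MM r ξ := by
    rw [D.MM_eq (ξ - 1), D.MM_eq ξ, mul_left_comm, mul_left_comm (rexp (-2)), ← Real.exp_add, ← Real.exp_add]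
    congr 2
    rw [hv0]; ring
  have e3 : ∫ x in Ioc 0 V, MM r ξ / (2 * V) = MM r ξ / 2 := by
    simp [hVpos.le]
    field_simp
  rw [e1, e2, e3] at hle
  have he : rexp (-2) < 1 / 4 := by
    rw [Real.exp_neg, show (2 : ℝ) = 1 + 1 by norm_num, Real.exp_add, inv_lt_comm₀ (by positivity) (by norm_num)]
    nlinarith [Real.exp_one_gt_d9]
  nlinarith

end Dick



lemma rankin {σ : ℝ} (hσ : 0 < σ) {x y : ℝ} (hx : 0 < x) (hy : 0 < y) :
    (Psi x y : ℝ) ≤ x ^ σ * rexp (QQ σ (Real.log y)) := by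
  set S : Set ℕ := {n : ℕ | 1 ≤ n ∧ (n : ℝ) ≤ x ∧ ∀ p : ℕ, p.Prime → p ∣ n → (p : ℝ) ≤ y} with hS
  have hfin : S.Finite := by
    refine (finite_Iic ⌊x⌋₊).subset ?_
    intro n hn
    exact Nat.le_floor hn.2.1
  set N := ⌊y⌋₊ + 1 with hN
  let f : ℕ →* ℝ :=
    { toFun := fun n => (n : ℝ) ^ (-σ)
      map_one' := by simp
      map_mul' := fun m n => by
        push_cast
        exact Real.mul_rpow (by positivity) (by positivity) }
  have hf : ∀ n, f n = (n : ℝ) ^ (-σ) := fun n => rfl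
  have hp : ∀ {p : ℕ}, p.Prime → ‖f p‖ < 1 := by
    intro p hp
    rw [hf, Real.norm_of_nonneg (by positivity)]
    exact (prime_rpow_le hσ hp).trans_lt (two_rpow_lt hσ)
  have hsum := (EulerProduct.summable_and_hasSum_smoothNumbers_prod_primesBelow_geometric hp N).2
  have hsub : ∀ n ∈ S, n ∈ N.smoothNumbers := by
    intro n hn
    rw [Nat.mem_smoothNumbers']
    intro p hp hpn
    exact Nat.lt_succ_of_le (Nat.le_floor (hn.2.2 p hp hpn))
  have h1 : ∑ n ∈ hfin.toFinset, f n ≤ ∏ p ∈ N.primesBelow, (1 - f p)⁻¹ := by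
    rw [← hsum.tsum_eq]
    have h := hsum.summable.sum_le_tsum (hfin.toFinset.subtype (· ∈ N.smoothNumbers))
      (fun i _ => by rw [hf]; positivity)
    refine le_trans (le_of_eq ?_) h
    rw [Finset.sum_subtype_eq_sum_filter, Finset.filter_true_of_mem]
    intro n hn
    exact hsub n (by simpa using hn)
  have h2 : ∏ p ∈ N.primesBelow, (1 - f p)⁻¹ ≤ rexp (QQ σ (Real.log y)) := by
    have e : ∏ p ∈ N.primesBelow, (1 - f p)⁻¹ = rexp (∑ p ∈ N.primesBelow, aP σ p) := by
      rw [Real.exp_sum]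
      apply Finset.prod_congr rfl
      intro p hp
      have hp' := Nat.prime_of_mem_primesBelow hp
      have := (prime_rpow_le hσ hp').trans_lt (two_rpow_lt hσ)
      rw [aP, Real.exp_neg, Real.exp_log (by linarith), hf]
    rw [e]
    apply exp_le_exp.2
    let s0 : Finset Nat.Primes := N.primesBelow.subtype Nat.Prime
    have hnn : ∀ p : Nat.Primes, p ∉ s0 → 0 ≤ (if Real.log (p : ℕ) ≤ Real.log y then aP σ p else 0) := by
      intro p _
      split_ifs
      · exact aP_nonneg hσ p.2
      · exact le_rfl
    have h : ∑ p ∈ s0, (if Real.log (p : ℕ) ≤ Real.log y then aP σ p else 0) ≤ QQ σ (Real.log y) :=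
      Summable.sum_le_tsum s0 hnn (QQ_summable σ (Real.log y))
    refine le_trans (le_of_eq ?_) h
    rw [← Finset.sum_subtype_of_mem (aP σ) (fun p hp => Nat.prime_of_mem_primesBelow hp)]
    refine Finset.sum_congr rfl ?_
    rintro ⟨p, hpp⟩ hp
    rw [Finset.mem_subtype] at hp
    have hlt : p < N := Nat.lt_of_mem_primesBelow hp
    have hle : Real.log (p : ℕ) ≤ Real.log y := by
      apply Real.log_le_log (by exact_mod_cast hpp.pos)
      exact (Nat.le_floor_iff hy.le).1 (Nat.lt_succ_iff.1 hlt)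
    exact (if_pos hle).symm
  have h3 : (Psi x y : ℝ) ≤ x ^ σ * ∑ n ∈ hfin.toFinset, f n := by
    rw [Psi, ← hS, Set.ncard_eq_toFinset_card S hfin, Finset.mul_sum, Finset.cast_card]
    apply Finset.sum_le_sum
    intro n hn
    have hn' : n ∈ S := by simpa using hn
    have hn0 : (0 : ℝ) < n := by exact_mod_cast hn'.1
    rw [hf, Real.rpow_neg hn0.le, ← div_eq_mul_inv, le_div_iff₀ (by positivity), one_mul]
    exact Real.rpow_le_rpow hn0.le hn'.2.1 hσ.le
  calc (Psi x y : ℝ) ≤ x ^ σ * ∑ n ∈ hfin.toFinset, f n := h3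
    _ ≤ _ := mul_le_mul_of_nonneg_left (h1.trans h2) (by positivity)



lemma ev_exp {a b : ℝ} (C : ℝ) (hab : a < b) : ∀ᶠ t : ℝ in atTop, C * t * rexp (a * t) ≤ rexp (b * t) := by
  have h1 := Real.tendsto_pow_mul_exp_neg_atTop_nhds_zero 1
  have h2 : Tendsto (fun t : ℝ => (b - a) * t) atTop atTop :=
    tendsto_id.const_mul_atTop (by linarith)
  have h3 := (h1.comp h2).const_mul (C / (b - a))
  rw [mul_zero] at h3
  filter_upwards [h3.eventually (gt_mem_nhds zero_lt_one)] with t ht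
  simp only [Function.comp, pow_one] at ht
  have hba : b - a ≠ 0 := by linarith
  have e1 : C / (b - a) * ((b - a) * t * rexp (-((b - a) * t))) = C * t * rexp (-((b - a) * t)) := by
    field_simp
  rw [e1] at ht
  have e2 : rexp (a * t) = rexp (-((b - a) * t)) * rexp (b * t) := by
    rw [← Real.exp_add]; ring_nf
  rw [e2, ← mul_assoc]
  nlinarith [exp_pos (b * t)]

lemma II_upper (ξ : ℝ) : II (ξ + 1) - II ξ ≤ gg (ξ + 1) := by
  unfold II
  rw [intervalIntegral.integral_interval_sub_left (gg_cont.intervalIntegrable _ _) (gg_cont.intervalIntegrable _ _)]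
  have : ∫ u in ξ..(ξ + 1), gg u ≤ ∫ u in ξ..(ξ + 1), gg (ξ + 1) := by
    apply intervalIntegral.integral_mono_on (by linarith) (gg_cont.intervalIntegrable _ _)
      intervalIntegrable_const
    intro u hu
    exact gg_mono hu.2
  simpa using this

lemma II_lower (ξ : ℝ) : gg (ξ - 1) ≤ II ξ - II (ξ - 1) := by
  unfold II
  rw [intervalIntegral.integral_interval_sub_left (gg_cont.intervalIntegrable _ _) (gg_cont.intervalIntegrable _ _)]
  have : ∫ u in (ξ - 1)..ξ, gg (ξ - 1) ≤ ∫ u in (ξ - 1)..ξ, gg u := by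
    apply intervalIntegral.integral_mono_on (by linarith) intervalIntegrable_const
      (gg_cont.intervalIntegrable _ _)
    intro u hu
    exact gg_mono hu.1
  simpa using this

set_option maxHeartbeats 1600000 in
lemma main_step {ρ : ℝ → ℝ} (D : Dick (fun v => ρ (max v 0))) {σ β γ : ℝ} (hσ : 0 < σ) (hσ1 : σ < 1)
    (hβ : 0 < β) (hγ : γ < β)
    (hom : ∀ T : ℝ, ∃ t ≥ T, QQ σ t - II ((1 - σ) * t) < -rexp (β * t))
    (η : ℝ) (hη : 0 < η) (T : ℝ) :
    ∃ x y : ℝ, T ≤ x ∧ T ≤ y ∧ (Real.log x) ^ (1 / (1 - σ) - η) ≤ y ∧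
      y ≤ (Real.log x) ^ (1 / (1 - σ) + η) ∧
      (Psi x y : ℝ) < x * ρ (Real.log x / Real.log y) * Real.exp (-y ^ γ) := by
  set κ := 1 - σ with hκd
  have hκ : 0 < κ := by linarith
  have hκ1 : κ < 1 := by linarith
  set c := Dick.MM (fun v => ρ (max v 0)) 0 with hc
  have hcpos : 0 < c := D.MM_pos 0
  set η' := η * κ / (1 + η * κ) with hη'
  have hηκ : 0 < η * κ := by positivity
  have hη'0 : 0 < η' := by positivity
  have hη'1 : η' < 1 := by rw [hη', div_lt_one (by positivity)]; linarith
  have hη'2 : η' ≤ η * κ := by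
    rw [hη', div_le_iff₀ (by positivity)]; nlinarith
  have hη'3 : (1 - η') * (1 + η * κ) = 1 := by
    rw [hη']; field_simp; ring
  set K := |Real.log (2 / c)| + 2 with hK
  set γ' := max γ 0 with hγ'
  have hγ'β : γ' < β := max_lt hγ hβ
  have hγ'0 : 0 ≤ γ' := le_max_right _ _
  have hlarge := (((ev_exp 12 (show (1 - η') * κ < κ by nlinarith)).and
    (ev_exp 5 (show κ < (1 + η') * κ by nlinarith))).and
    (ev_exp (K + κ + 1) hγ'β)).and ((eventually_ge_atTop (2 / κ)).and ((eventually_ge_atTop (max T 1)).and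
      ((Real.tendsto_exp_atTop.comp (tendsto_id.const_mul_atTop
        (show 0 < (1 - η') * κ from mul_pos (by linarith) hκ))).eventually_ge_atTop T)))
  obtain ⟨T0, hT0⟩ := eventually_atTop.1 hlarge
  obtain ⟨t, ht, hQ⟩ := hom T0
  obtain ⟨⟨⟨hE1, hE2⟩, hE3⟩, hE4, hE5, hE6⟩ := hT0 t ht
  simp only [Function.comp, id] at hE6
  have htT : T ≤ t := (le_max_left _ _).trans hE5
  have ht1 : 1 ≤ t := (le_max_right _ _).trans hE5
  have ht0 : 0 < t := by linarith
  have hξ2 : 2 ≤ κ * t := by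
    have := (div_le_iff₀ hκ).1 hE4; linarith
  obtain ⟨v, hv0, hv1, hv2, hv3⟩ := D.exists_v (κ * t)
  set V := II (κ * t + 1) - II (κ * t) + 2 with hV
  have hVle : V ≤ rexp (κ * t + 1) + 2 := by
    have := (II_upper (κ * t)).trans (gg_le_exp (by linarith))
    linarith
  have hVpos : 0 < V := by linarith
  -- bounds for e
  have he1 := Real.exp_one_gt_d9
  have he2 := Real.exp_one_lt_d9
  have hk1 : 1 ≤ rexp (κ * t) := Real.one_le_exp (by linarith)
  have hk2 : rexp (κ * t + 1) ≤ 3 * rexp (κ * t) := by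
    rw [Real.exp_add]; nlinarith
  have hk3 : 1 ≤ rexp ((1 - η') * κ * t) :=
    Real.one_le_exp (mul_nonneg (mul_nonneg (by linarith) hκ.le) ht0.le)
  -- bounds for log x
  have hup : t * v ≤ rexp ((1 + η') * κ * t) := by
    refine le_trans ?_ hE2
    have : v ≤ 5 * rexp (κ * t) := by linarith
    calc t * v ≤ t * (5 * rexp (κ * t)) := mul_le_mul_of_nonneg_left this ht0.le
      _ = 5 * t * rexp (κ * t) := by ring
  have hlo : rexp ((1 - η') * κ * t) ≤ t * v := by
    have h1 : gg (κ * t - 1) - 2 ≤ v := by linarith [II_lower (κ * t)]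
    have h2 := gg_mul (κ * t - 1)
    have h3 : rexp (κ * t) = rexp 1 * rexp (κ * t - 1) := by rw [← Real.exp_add]; ring_nf
    have hgn := gg_nonneg (κ * t - 1)
    have h4 : (κ * t - 1) * gg (κ * t - 1) ≤ t * gg (κ * t - 1) :=
      mul_le_mul_of_nonneg_right (by linarith [mul_le_mul_of_nonneg_right hκ1.le ht0.le]) hgn
    have h5 : rexp (κ * t - 1) - 1 - 2 * t ≤ t * v := by
      have := mul_le_mul_of_nonneg_left h1 ht0.le
      rw [mul_sub] at this
      linarith
    have h6 : rexp (κ * t) ≤ 3 * rexp (κ * t - 1) := by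
      rw [h3]; nlinarith [exp_pos (κ * t - 1)]
    have h7 : t ≤ t * rexp ((1 - η') * κ * t) := le_mul_of_one_le_right ht0.le hk3
    have h8 : rexp ((1 - η') * κ * t) ≤ t * rexp ((1 - η') * κ * t) :=
      le_mul_of_one_le_left (exp_pos _).le ht1
    linarith
  have hbase1 : 1 ≤ t * v := hk3.trans hlo
  have hbase0 : 0 ≤ t * v := by linarith
  refine ⟨rexp (t * v), rexp t, ?_, ?_, ?_, ?_, ?_⟩
  · have := Real.add_one_le_exp (t * v)
    linarith
  · have := Real.add_one_le_exp t
    linarith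
  · rw [Real.log_exp]
    rcases le_total (1 / κ - η) 0 with h | h
    · exact (Real.rpow_le_one_of_one_le_of_nonpos hbase1 h).trans (Real.one_le_exp ht0.le)
    · refine (Real.rpow_le_rpow hbase0 hup h).trans ?_
      rw [← Real.exp_mul]
      apply exp_le_exp.2
      have e : (1 + η') * κ * t * (1 / κ - η) = (1 + η') * (1 - η * κ) * t := by field_simp
      have h0 : 0 ≤ 1 - η * κ := by
        have : (1 / κ - η) * κ = 1 - η * κ := by field_simp
        rw [← this]; positivity
      rw [e]
      have : (1 + η') * (1 - η * κ) ≤ 1 := by nlinarith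
      nlinarith
  · rw [Real.log_exp]
    refine le_trans ?_ (Real.rpow_le_rpow (exp_pos _).le hlo (by positivity))
    rw [← Real.exp_mul]
    apply exp_le_exp.2
    have e : (1 - η') * κ * t * (1 / κ + η) = (1 - η') * (1 + η * κ) * t := by field_simp
    rw [e, hη'3, one_mul]
  · have hr := rankin hσ (exp_pos (t * v)) (exp_pos t)
    rw [Real.log_exp] at hr
    rw [Real.log_exp, Real.log_exp, mul_div_cancel_left₀ _ ht0.ne', ← Real.exp_mul t γ]
    simp only [max_eq_left hv0.le] at hv3
    rw [← Real.exp_mul] at hr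
    have e1 : rexp (t * v) = rexp (t * v * σ) * rexp (κ * t * v) := by
      rw [← Real.exp_add, hκd]; ring_nf
    have hVlog : rexp (κ * t + 1) + 2 ≤ rexp (κ * t + 2) := by
      rw [Real.exp_add, Real.exp_add, show (2 : ℝ) = 1 + 1 by norm_num, Real.exp_add]
      have hee : rexp 1 + 2 ≤ rexp 1 * rexp 1 := by nlinarith
      have := mul_le_mul_of_nonneg_left hee (exp_pos (κ * t)).le
      linarith
    have hVlog2 : 2 * V / c ≤ rexp (Real.log (2 / c) + (κ * t + 2)) := by
      rw [Real.exp_add, Real.exp_log (by positivity), mul_div_right_comm]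
      exact mul_le_mul_of_nonneg_left (hVle.trans hVlog) (by positivity)
    have hg1 : rexp (t * γ) ≤ rexp (γ' * t) := exp_le_exp.2 (by
      have := le_max_left γ 0
      rw [mul_comm]
      exact mul_le_mul_of_nonneg_right this ht0.le)
    have hg2 : 1 ≤ rexp (γ' * t) := Real.one_le_exp (by positivity)
    have hE3' : Real.log (2 / c) + (κ * t + 2) + rexp (t * γ) ≤ rexp (β * t) := by
      refine le_trans ?_ hE3
      have hl := le_abs_self (Real.log (2 / c))
      have hK0 : 0 ≤ K := by positivity
      have q1 : K ≤ K * (t * rexp (γ' * t)) := le_mul_of_one_le_right hK0 (by nlinarith)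
      have q2 : κ * t ≤ κ * (t * rexp (γ' * t)) := mul_le_mul_of_nonneg_left (by nlinarith) hκ.le
      have q3 : rexp (γ' * t) ≤ t * rexp (γ' * t) := by nlinarith
      nlinarith
    have hfin : rexp (-rexp (β * t)) ≤ c / (2 * V) * rexp (-rexp (t * γ)) := by
      have h1 : rexp (-rexp (β * t)) ≤ rexp (-(Real.log (2 / c) + (κ * t + 2))) * rexp (-rexp (t * γ)) := by
        rw [← Real.exp_add]
        exact exp_le_exp.2 (by linarith)
      refine h1.trans (mul_le_mul_of_nonneg_right ?_ (exp_pos _).le)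
      rw [Real.exp_neg, ← inv_div (2 * V) c]
      exact inv_anti₀ (by positivity) hVlog2
    calc (Psi (rexp (t * v)) (rexp t) : ℝ) ≤ rexp (t * v * σ) * rexp (QQ σ t) := hr
      _ < rexp (t * v * σ) * rexp (II (κ * t) + -rexp (β * t)) := by
          apply mul_lt_mul_of_pos_left _ (exp_pos _)
          exact exp_lt_exp.2 (by linarith)
      _ = rexp (t * v * σ) * (rexp (II (κ * t)) * rexp (-rexp (β * t))) := by rw [Real.exp_add]
      _ ≤ rexp (t * v * σ) * (rexp (II (κ * t)) * (c / (2 * V) * rexp (-rexp (t * γ)))) := by gcongr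
      _ = rexp (t * v * σ) * (c * rexp (II (κ * t)) / (2 * V)) * rexp (-rexp (t * γ)) := by ring
      _ ≤ rexp (t * v * σ) * (ρ v * rexp (κ * t * v)) * rexp (-rexp (t * γ)) := by gcongr
      _ = rexp (t * v) * ρ v * rexp (-rexp (t * γ)) := by rw [e1]; ring


end Aux

/-- If RH fails, then for fixed `σ₀ ∈ (1-Θ,Θ)` and `ε > 0` there are sequences
`xₙ → ∞`, `yₙ → ∞` with `yₙ = (log xₙ)^{1/(1-σ₀)+o(1)}` along which
`Ψ(xₙ,yₙ) < xₙ ρ(log xₙ/log yₙ) exp(-yₙ^{Θ-σ₀-ε})`.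
The Dickman function `ρ` is characterized by the hypotheses. -/
theorem stmt2 (ρ : ℝ → ℝ) (hρ_cont : ContinuousOn ρ (Set.Ici 0))
    (hρ_one : ∀ t ∈ Set.Icc (0 : ℝ) 1, ρ t = 1)
    (hρ_eq : ∀ t ≥ (1 : ℝ), ρ t = 1 - ∫ v in (1 : ℝ)..t, ρ (v - 1) / v)
    (hRH : ¬ RiemannHypothesis)
    (σ₀ : ℝ) (hσ₀l : 1 - Theta < σ₀) (hσ₀r : σ₀ < Theta)
    (ε : ℝ) (hε : 0 < ε) :
    ∃ x y δ : ℕ → ℝ,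
      Tendsto x atTop atTop ∧ Tendsto y atTop atTop ∧
      (∀ n, 0 < δ n) ∧ Tendsto δ atTop (nhds 0) ∧
      ∀ n, (Real.log (x n)) ^ (1 / (1 - σ₀) - δ n) ≤ y n ∧
        y n ≤ (Real.log (x n)) ^ (1 / (1 - σ₀) + δ n) ∧
        (Psi (x n) (y n) : ℝ) < x n * ρ (Real.log (x n) / Real.log (y n)) *
          Real.exp (-(y n) ^ (Theta - σ₀ - ε)) := by
  set S : Set ℝ := Complex.re '' {z : ℂ | riemannZeta z = 0 ∧ 0 < z.re ∧ z.re < 1} with hS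
  have hT : Theta = sSup S := rfl
  have hne : S.Nonempty := by
    by_contra h
    rw [Set.not_nonempty_iff_eq_empty] at h
    rw [h, Real.sSup_empty] at hT
    linarith
  have hle : Theta ≤ 1 := by
    rw [hT]
    apply csSup_le hne
    rintro _ ⟨z, hz, rfl⟩
    exact hz.2.2.le
  have hσ : 0 < σ₀ := by linarith
  have hσ1 : σ₀ < 1 := by linarith
  obtain ⟨β, hβ1, hβ2⟩ := exists_between
    (show max (max 0 (1 - 2 * σ₀)) (Theta - σ₀ - ε) < Theta - σ₀ from
      max_lt (max_lt (by linarith) (by linarith)) (by linarith))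
  have hb0 : 0 < β := ((le_max_left _ _).trans (le_max_left _ _)).trans_lt hβ1
  have hb1 : 1 - 2 * σ₀ < β := ((le_max_right _ _).trans (le_max_left _ _)).trans_lt hβ1
  have hb2 : Theta - σ₀ - ε < β := (le_max_right _ _).trans_lt hβ1
  obtain ⟨_, ⟨z, hz, rfl⟩, hzβ⟩ := exists_lt_of_lt_csSup hne
    (show β + σ₀ < sSup S by rw [← hT]; linarith)
  have hom := omega_res hσ hb0 hb1 hz.1 hz.2.2 hzβ
  have D := dick_of hρ_cont hρ_one hρ_eq
  have key : ∀ n : ℕ, ∃ x y : ℝ, (n : ℝ) ≤ x ∧ (n : ℝ) ≤ y ∧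
      (Real.log x) ^ (1 / (1 - σ₀) - 1 / ((n : ℝ) + 1)) ≤ y ∧
      y ≤ (Real.log x) ^ (1 / (1 - σ₀) + 1 / ((n : ℝ) + 1)) ∧
      (Psi x y : ℝ) < x * ρ (Real.log x / Real.log y) * Real.exp (-y ^ (Theta - σ₀ - ε)) :=
    fun n => main_step D hσ hσ1 hb0 hb2 hom _ (by positivity) _
  choose x y hx hy h1 h2 h3 using key
  exact ⟨x, y, fun n => 1 / ((n : ℝ) + 1), tendsto_atTop_mono hx tendsto_natCast_atTop_atTop,
    tendsto_atTop_mono hy tendsto_natCast_atTop_atTop, fun n => by positivity,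
    tendsto_one_div_add_atTop_nhds_zero_nat, fun n => ⟨h1 n, h2 n, h3 n⟩⟩
end

section
/- The function Z is strictly decreasing on (0,1]: for all real t₁, t₂ with 0 < t₁ < t₂ ≤ 1 one has Z(t₁) > Z(t₂). -/
open Real

/-- `Z(t) = ζ(t)(t-1)/t` for `t ∈ (0,1)`, with `Z(1) = 1`. -/
noncomputable def Zfun (t : ℝ) : ℝ :=
  if t = 1 then 1 else (riemannZeta (t : ℂ)).re * (t - 1) / t

noncomputable def fr5 (x : ℝ) : ℝ := (Set.Ioi (1:ℝ)).indicator (fun y => Int.fract y) x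

noncomputable def frC5 (x : ℝ) : ℂ := (fr5 x : ℂ)

open Real Set MeasureTheory Filter Topology

lemma fr5_nonneg (x : ℝ) : 0 ≤ fr5 x :=
  Set.indicator_nonneg (fun y _ => Int.fract_nonneg y) x

lemma fr5_le (x : ℝ) : fr5 x ≤ 1 := by
  unfold fr5 Set.indicator
  split_ifs
  · exact (Int.fract_lt_one x).le
  · exact zero_le_one

lemma fr5_meas : Measurable fr5 :=
  measurable_fract.indicator measurableSet_Ioi

lemma frC5_norm (x : ℝ) : ‖frC5 x‖ ≤ 1 := by
  unfold frC5
  rw [Complex.norm_real, Real.norm_of_nonneg (fr5_nonneg x)]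
  exact fr5_le x

lemma frC5_li : LocallyIntegrableOn frC5 (Ioi 0) := by
  refine LocallyIntegrable.locallyIntegrableOn ?_ _
  refine (locallyIntegrable_const (1:ℝ)).mono ?_ ?_
  · exact (Complex.measurable_ofReal.comp fr5_meas).aestronglyMeasurable
  · refine Eventually.of_forall fun x => ?_
    simpa using frC5_norm x

lemma frC5_top : frC5 =O[atTop] (fun x : ℝ => x ^ (-(0:ℝ))) := by
  refine Asymptotics.IsBigO.of_bound 1 (Eventually.of_forall fun x => ?_)
  simpa using frC5_norm x

lemma frC5_bot (b : ℝ) : frC5 =O[𝓝[>] 0] (fun x : ℝ => x ^ (-b)) := by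
  refine Asymptotics.IsBigO.of_bound 1 ?_
  have : ∀ᶠ x : ℝ in 𝓝[>] 0, x < 1 :=
    mem_nhdsWithin_of_mem_nhds (Iio_mem_nhds zero_lt_one)
  filter_upwards [this] with x hx
  have : frC5 x = 0 := by
    simp [frC5, fr5, hx.le]
  rw [this]
  simp

lemma frC5_conv {s : ℂ} (hs : s.re < 0) : MellinConvergent frC5 s :=
  mellinConvergent_of_isBigO_rpow (b := s.re - 1) frC5_li frC5_top hs (frC5_bot _) (by linarith)

lemma frC5_diff {s : ℂ} (hs : s.re < 0) : DifferentiableAt ℂ (mellin frC5) s :=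
  mellin_differentiableAt_of_isBigO_rpow (b := s.re - 1) frC5_li frC5_top hs (frC5_bot _)
    (by linarith)

lemma mellin_frC5 (s : ℂ) : mellin frC5 (-s) =
    ∫ x in Ioi (1:ℝ), (x:ℂ) ^ (-s - 1) * ((Int.fract x : ℝ) : ℂ) := by
  unfold mellin
  have h : (fun x : ℝ => (x:ℂ) ^ (-s - 1) • frC5 x) =
      (Ioi (1:ℝ)).indicator (fun x => (x:ℂ) ^ (-s - 1) * ((Int.fract x : ℝ) : ℂ)) := by
    ext x
    by_cases hx : x ∈ Ioi (1:ℝ)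
    · simp only [frC5, fr5, smul_eq_mul, Set.indicator_of_mem hx]
    · simp only [frC5, fr5, smul_eq_mul, Set.indicator_of_notMem hx]; simp
  rw [h, setIntegral_indicator measurableSet_Ioi]
  congr 2
  ext x
  simp only [mem_inter_iff, mem_Ioi]
  constructor
  · exact fun h => h.2
  · exact fun h => ⟨by linarith, h⟩

lemma zeta_gt {s : ℂ} (hs : 1 < s.re) :
    riemannZeta s = s / (s - 1) - s * mellin frC5 (-s) := by
  have h0 : s - 1 ≠ 0 := by
    intro h
    rw [sub_eq_zero] at h
    simp [h] at hs
  have h1 : riemannZeta s = s * ∫ t in Ioi (1 : ℝ),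
      (∑ k ∈ Finset.Icc 1 ⌊t⌋₊, (1 : ℕ → ℂ) k) * (t:ℂ) ^ (-(s + 1)) := by
    rw [← LSeries_one_eq_riemannZeta hs]
    refine LSeries_eq_mul_integral' _ zero_le_one hs ?_
    refine Asymptotics.IsBigO.of_bound 1 (Eventually.of_forall fun n => ?_)
    simp
  have i1 : IntegrableOn (fun t : ℝ => (t:ℂ) ^ (-s)) (Ioi 1) :=
    integrableOn_Ioi_cpow_of_lt (by simpa using hs) zero_lt_one
  have i2 : IntegrableOn (fun x : ℝ => (x:ℂ) ^ (-s - 1) * ((Int.fract x : ℝ) : ℂ)) (Ioi 1) := by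
    have := (frC5_conv (s := -s) (by simp; linarith)).mono_set
      (Ioi_subset_Ioi (zero_le_one (α := ℝ)))
    refine this.congr_fun (fun x hx => ?_) measurableSet_Ioi
    simp only [frC5, fr5, smul_eq_mul, Set.indicator_of_mem hx]
  have h2 : ∫ t in Ioi (1 : ℝ),
      (∑ k ∈ Finset.Icc 1 ⌊t⌋₊, (1 : ℕ → ℂ) k) * (t:ℂ) ^ (-(s + 1)) =
      (∫ t in Ioi (1:ℝ), (t:ℂ) ^ (-s)) - mellin frC5 (-s) := by
    rw [mellin_frC5, ← integral_sub i1 i2]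
    refine setIntegral_congr_fun measurableSet_Ioi fun x hx => ?_
    have hx0 : (0:ℝ) < x := lt_trans zero_lt_one hx
    have hf : ((⌊x⌋₊ : ℝ)) = x - Int.fract x := by
      rw [natCast_floor_eq_intCast_floor hx0.le]
      linarith [Int.floor_add_fract x]
    have hfc : ((⌊x⌋₊ : ℂ)) = (x:ℂ) - ((Int.fract x : ℝ) : ℂ) := by
      exact_mod_cast congrArg (Complex.ofReal) hf
    have hp : (x:ℂ) ^ (-s) = (x:ℂ) ^ (-s - 1) * x := by
      rw [Complex.cpow_sub _ _ (by exact_mod_cast hx0.ne'), Complex.cpow_one,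
        div_mul_cancel₀ _ (by exact_mod_cast hx0.ne')]
    simp only [Pi.one_apply, Finset.sum_const, Nat.card_Icc, nsmul_eq_mul, mul_one,
      Nat.add_sub_cancel]
    rw [hfc, hp, show -(s+1) = -s - 1 by ring]
    ring
  rw [h1, h2, integral_Ioi_cpow_of_lt (by simpa using hs) zero_lt_one]
  have h3 : -s + 1 ≠ 0 := by
    intro h; apply h0; linear_combination -h
  simp only [Complex.ofReal_one, Complex.one_cpow]
  field_simp
  ring

lemma zeta1_eq {s : ℂ} (hs : 0 < s.re) :
    riemannZeta₁ s = s - (s - 1) * s * mellin frC5 (-s) := by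
  have hU : IsOpen {z : ℂ | 0 < z.re} := isOpen_lt continuous_const Complex.continuous_re
  have hc : IsPreconnected {z : ℂ | 0 < z.re} :=
    (convex_halfSpace_re_gt 0).isPreconnected
  have hg : DifferentiableOn ℂ (fun s : ℂ => s - (s - 1) * s * mellin frC5 (-s))
      {z : ℂ | 0 < z.re} := by
    intro z hz
    have hz' : 0 < z.re := hz
    have : DifferentiableAt ℂ (fun s : ℂ => mellin frC5 (-s)) z :=
      DifferentiableAt.comp (g := mellin frC5) (f := fun s : ℂ => -s) z (frC5_diff (s := -z) (by simpa using hz')) differentiableAt_id.neg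
    exact DifferentiableAt.differentiableWithinAt (by fun_prop)
  have hf : DifferentiableOn ℂ riemannZeta₁ {z : ℂ | 0 < z.re} :=
    differentiable_riemannZeta₁.differentiableOn
  refine (hf.analyticOnNhd hU).eqOn_of_preconnected_of_eventuallyEq (hg.analyticOnNhd hU) hc
    (z₀ := 2) (by simp) ?_ hs
  have : {z : ℂ | 1 < z.re} ∈ 𝓝 (2:ℂ) :=
    (isOpen_lt continuous_const Complex.continuous_re).mem_nhds (by simp)
  filter_upwards [this] with z hz
  have hz' : 1 < z.re := hz
  have hz1 : z ≠ 1 := by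
    rintro rfl
    simp at hz'
  have h1 := riemannZeta_eq_inv_sub_mul hz1
  rw [zeta_gt hz'] at h1
  have h0 : z - 1 ≠ 0 := sub_ne_zero.mpr hz1
  field_simp at h1
  linear_combination -h1

noncomputable def I5 (t : ℝ) : ℝ := ∫ x in Ioi (0:ℝ), x ^ (-t - 1) * fr5 x

lemma I5_aux (t x : ℝ) (hx : x ∈ Ioi (0:ℝ)) :
    (x:ℂ) ^ (-(t:ℂ) - 1) • frC5 x = ((x ^ (-t - 1) * fr5 x : ℝ) : ℂ) := by
  have hx' : 0 < x := hx
  simp only [frC5, smul_eq_mul]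
  rw [Complex.ofReal_mul, Complex.ofReal_cpow hx'.le]
  push_cast
  rfl

lemma I5_int {t : ℝ} (ht : 0 < t) :
    IntegrableOn (fun x : ℝ => x ^ (-t - 1) * fr5 x) (Ioi 0) := by
  have h := frC5_conv (s := -(t:ℂ)) (by simpa using ht)
  have h2 : IntegrableOn (fun x : ℝ => ((x ^ (-t - 1) * fr5 x : ℝ) : ℂ)) (Ioi 0) :=
    IntegrableOn.congr_fun h (I5_aux t) measurableSet_Ioi
  have := h2.re
  simpa [IntegrableOn] using this

lemma I5_eq (t : ℝ) : mellin frC5 (-(t:ℂ)) = (I5 t : ℂ) := by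
  unfold mellin I5
  rw [setIntegral_congr_fun measurableSet_Ioi (I5_aux t)]
  exact integral_ofReal

lemma I5_mono {a b : ℝ} (ha : 0 < a) (hab : a < b) : I5 b ≤ I5 a := by
  refine setIntegral_mono_on (I5_int (ha.trans hab)) (I5_int ha) measurableSet_Ioi fun x _ => ?_
  by_cases hx : x ∈ Ioi (1:ℝ)
  · refine mul_le_mul_of_nonneg_right ?_ (fr5_nonneg x)
    exact Real.rpow_le_rpow_of_exponent_le (le_of_lt hx) (by linarith)
  · simp [fr5, Set.indicator_of_notMem hx]

lemma I5_pos {t : ℝ} (ht : 0 < t) : 0 < I5 t := by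
  unfold I5
  rw [setIntegral_pos_iff_support_of_nonneg_ae _ (I5_int ht)]
  · have hs : Ioo (1:ℝ) 2 ⊆ (Function.support fun x : ℝ => x ^ (-t - 1) * fr5 x) ∩ Ioi 0 := by
      intro x hx
      have hx0 : 0 < x := by linarith [hx.1]
      refine ⟨?_, hx0⟩
      have h1 : 0 < x ^ (-t - 1) := Real.rpow_pos_of_pos hx0 _
      have h2 : fr5 x = x - 1 := by
        unfold fr5
        rw [Set.indicator_of_mem (show x ∈ Ioi (1:ℝ) from hx.1)]
        rw [Int.fract_eq_iff]
        exact ⟨by linarith [hx.1], by linarith [hx.2], 1, by simp⟩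
      rw [Function.mem_support, h2]
      exact (mul_pos h1 (by linarith [hx.1])).ne'
    refine lt_of_lt_of_le ?_ (measure_mono hs)
    simp
  · rw [EventuallyLE, ae_restrict_iff' measurableSet_Ioi]
    refine Eventually.of_forall fun x hx => ?_
    exact mul_nonneg (Real.rpow_nonneg (le_of_lt hx) _) (fr5_nonneg x)

lemma Zfun_eq {t : ℝ} (ht : 0 < t) : Zfun t = 1 + (1 - t) * I5 t := by
  unfold Zfun
  split_ifs with h
  · simp [h]
  have h1 : (t:ℂ) ≠ 1 := by exact_mod_cast h
  have h2 := riemannZeta_eq_inv_sub_mul h1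
  rw [zeta1_eq (by simpa using ht), I5_eq] at h2
  have h3 : riemannZeta (t:ℂ) = (((t - 1)⁻¹ * (t - (t - 1) * t * I5 t) : ℝ) : ℂ) := by
    rw [h2]; push_cast; rfl
  rw [h3, Complex.ofReal_re]
  have h4 : t - 1 ≠ 0 := sub_ne_zero.mpr h
  field_simp
  ring

/-- `Z` is strictly decreasing on `(0,1]`. -/
theorem stmt5 : ∀ t₁ t₂ : ℝ, 0 < t₁ → t₁ < t₂ → t₂ ≤ 1 → Zfun t₂ < Zfun t₁ := by
  intro a b ha hab hb
  rw [Zfun_eq ha, Zfun_eq (ha.trans hab)]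
  have h1 := I5_mono ha hab
  have h2 := I5_pos ha
  nlinarith [mul_le_mul_of_nonneg_left h1 (sub_nonneg.mpr hb), mul_pos (sub_pos.mpr hab) h2]
end

section
/- There are absolute constants c, C > 0 such that uniformly for all x ≥ y ≥ 2 (so that u = log x/log y ≥ 1): c · u log(u+1) ≤ y^{1−σ} ≤ C · u log(u+1), where σ = 1 − ξ(u)/log y. -/
open Real

theorem aux12 (u t : ℝ) (hu : 1 ≤ u) (ht : 0 ≤ t) (h : Real.exp t = 1 + u * t)
    (hle : u ≤ Real.exp t) :
    (1/9) * (u * Real.log (u + 1)) ≤ Real.exp t ∧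
      Real.exp t ≤ 4 * (u * Real.log (u + 1)) := by
  have hL : (1/2 : ℝ) ≤ Real.log (u + 1) := by
    have h1 : Real.log 2 ≤ Real.log (u + 1) := Real.log_le_log (by norm_num) (by linarith)
    have := Real.log_two_gt_d9
    linarith
  have hLu : Real.log (u + 1) ≤ u := by
    have := Real.log_le_sub_one_of_pos (show 0 < u + 1 by linarith)
    linarith
  have hE1 : 1 ≤ Real.exp t := Real.one_le_exp ht
  constructor
  · rcases le_or_gt 1 t with h1 | h1
    · have h2 : Real.log (u + 1) ≤ t := by
        rw [Real.log_le_iff_le_exp (by linarith), h]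
        nlinarith
      have h3 : u * Real.log (u + 1) ≤ u * t := by gcongr
      nlinarith
    · have h2 : Real.exp t < 3 := by
        have h3 : Real.exp t < Real.exp 1 := Real.exp_lt_exp.mpr h1
        have := Real.exp_one_lt_d9
        linarith
      nlinarith
  · have h0 : Real.exp t = Real.exp (t/2) * Real.exp (t/2) := by
      rw [← Real.exp_add]; ring_nf
    have h1 : 1 ≤ Real.exp (t/2) := Real.one_le_exp (by linarith)
    have h2 : t ≤ Real.exp (t/2) := by
      have h4 : t/4 + 1 ≤ Real.exp (t/4) := Real.add_one_le_exp _
      have h5 : Real.exp (t/2) = Real.exp (t/4) * Real.exp (t/4) := by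
        rw [← Real.exp_add]; ring_nf
      have h6 : (t/4+1)*(t/4+1) ≤ Real.exp (t/4) * Real.exp (t/4) := by gcongr
      nlinarith [sq_nonneg (t/4 - 1)]
    have h3 : Real.exp (t/2) ≤ u + 1 := by
      have h4 : Real.exp (t/2) * Real.exp (t/2) ≤ (u+1) * Real.exp (t/2) := by
        rw [← h0, h]; nlinarith
      exact le_of_mul_le_mul_right h4 (Real.exp_pos _)
    have h4 : t/2 ≤ Real.log (u + 1) := (Real.le_log_iff_exp_le (by linarith)).mpr h3
    nlinarith

/-- Uniformly for `x ≥ y ≥ 2` one has `y^{1-σ} ≍ u log(u+1)`, where `u = log x/log y`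
and `σ = 1 - ξ(u)/log y`. The function `ξ` is characterized by the hypotheses. -/
theorem stmt12 (ξ : ℝ → ℝ) (hξ_one : ξ 1 = 0)
    (hξ : ∀ u > (1 : ℝ), 0 < ξ u ∧ Real.exp (ξ u) = 1 + u * ξ u) :
    ∃ c C : ℝ, 0 < c ∧ 0 < C ∧
      ∀ x y : ℝ, 2 ≤ y → y ≤ x →
      (let u := Real.log x / Real.log y
       let s := 1 - ξ u / Real.log y
       c * (u * Real.log (u + 1)) ≤ y ^ (1 - s) ∧
         y ^ (1 - s) ≤ C * (u * Real.log (u + 1))) := by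
  refine ⟨1/9, 4, by norm_num, by norm_num, ?_⟩
  intro x y hy hxy u s
  have hl : 0 < Real.log y := Real.log_pos (by linarith)
  have hu : 1 ≤ u := by
    show 1 ≤ Real.log x / Real.log y
    rw [le_div_iff₀ hl, one_mul]
    exact Real.log_le_log (by linarith) hxy
  have hs : y ^ (1 - s) = Real.exp (ξ u) := by
    rw [Real.rpow_def_of_pos (by linarith)]
    congr 1
    show Real.log y * (1 - (1 - ξ u / Real.log y)) = ξ u
    field_simp
    ring
  rw [hs]
  clear_value u
  rcases hu.eq_or_lt with h1 | h1
  · subst h1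
    apply aux12 _ _ le_rfl <;> simp [hξ_one]
  · obtain ⟨hp, he⟩ := hξ u h1
    refine aux12 _ _ hu hp.le he ?_
    have h2 : -ξ u + 1 ≤ Real.exp (-ξ u) := Real.add_one_le_exp _
    have h3 : Real.exp (-ξ u) * Real.exp (ξ u) = 1 := by
      rw [← Real.exp_add]; simp
    have h4 : (-ξ u + 1) * Real.exp (ξ u) ≤ 1 := by
      have h6 := mul_le_mul_of_nonneg_right h2 (Real.exp_pos (ξ u)).le
      linarith
    have h5 : u * ξ u ≤ Real.exp (ξ u) * ξ u := by nlinarith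
    exact le_of_mul_le_mul_right h5 hp
end

section
/- Fix s₀ ∈ (0,1). For every real s > 1 − s₀: ∫₁^∞ A₁(x) x^{−s−1} dx = (1/s)·log ζ(s+s₀) and ∫₁^∞ A₂(x) x^{−s−1} dx = (1/s)·log( s/(s+s₀−1) ), where A₁(x) := Σ_{n ≤ x} Λ(n)/( n^{s₀} log n ) and A₂(x) := I((1−s₀) log x). -/
open Real MeasureTheory
open scoped ArithmeticFunction.vonMangoldt

/-- `I(s) = ∫₀^s (e^v - 1)/v dv`. -/
noncomputable def Ifun (s : ℝ) : ℝ := ∫ v in (0 : ℝ)..s, (Real.exp v - 1) / v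

/-- `A₁(x) = ∑_{n ≤ x} Λ(n)/(n^{s₀} log n)`. -/
noncomputable def A1 (s₀ x : ℝ) : ℝ :=
  ∑ n ∈ Finset.Icc 1 ⌊x⌋₊, Λ n / ((n : ℝ) ^ s₀ * Real.log n)

/-- `A₂(x) = I((1-s₀) log x)`. -/
noncomputable def A2 (s₀ x : ℝ) : ℝ := Ifun ((1 - s₀) * Real.log x)

lemma A1_aux (s₀ : ℝ) (s : ℝ) (hs : 1 - s₀ < s) (hspos : 0 < s) :
    (∫ x in Set.Ioi (1 : ℝ), A1 s₀ x * x ^ (-s - 1)) =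
        (1 / s) * Real.log ((riemannZeta ((s + s₀ : ℝ) : ℂ)).re) := by
  rw [log_riemannZeta_eq (by linarith)]
  set a : ℕ → ℝ := fun n => Λ n / ((n : ℝ) ^ s₀ * Real.log n) with ha
  have hapos : ∀ n, 0 ≤ a n := fun n => by
    have := ArithmeticFunction.vonMangoldt_nonneg (n := n)
    have := Real.log_natCast_nonneg n
    simp only [ha]; positivity
  have ha0 : ∀ n, n < 2 → a n = 0 := by
    intro n hn
    interval_cases n <;> simp [ha]
  set F : ℕ → ℝ → ℝ := fun n => (Set.Ici (n : ℝ)).indicator (fun x => a n * x ^ (-s - 1)) with hF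
  have hint : ∀ n, Integrable (F n) (volume.restrict (Set.Ioi (1 : ℝ))) := by
    intro n
    refine Integrable.indicator ?_ measurableSet_Ici
    exact (integrableOn_Ioi_rpow_of_lt (by linarith) one_pos).const_mul _
  have hval : ∀ n, ∫ x in Set.Ioi (1 : ℝ), F n x
      = (1 / s) * (Λ n / ((n : ℝ) ^ (s + s₀) * Real.log n)) := by
    intro n
    rcases lt_or_ge n 2 with hn | hn
    · have h0 := ha0 n hn
      have : F n = 0 := by
        simp only [hF, h0, zero_mul]; exact Set.indicator_zero _ _
      rw [this]
      interval_cases n <;> simp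
    · have hn1 : (1 : ℝ) < n := by exact_mod_cast hn
      have hn0 : (0 : ℝ) < n := by linarith
      simp only [hF]
      rw [setIntegral_indicator measurableSet_Ici,
        Set.inter_eq_right.mpr (Set.Ici_subset_Ioi.2 hn1), integral_Ici_eq_integral_Ioi,
        integral_const_mul, integral_Ioi_rpow_of_lt (by linarith) hn0,
        show -s - 1 + 1 = -s by ring, Real.rpow_neg hn0.le, Real.rpow_add hn0, ha]
      field_simp
  have hFnn : ∀ n, ∀ x ∈ Set.Ioi (1 : ℝ), ‖F n x‖ = F n x := by
    intro n x hx
    apply Real.norm_of_nonneg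
    apply Set.indicator_apply_nonneg
    intro _
    have : (0 : ℝ) < x := lt_trans one_pos hx
    have := hapos n
    positivity
  have hsum : Summable fun n : ℕ => (1 / s) * (Λ n / ((n : ℝ) ^ (s + s₀) * Real.log n)) := by
    apply Summable.mul_left
    refine Summable.of_nonneg_of_le (f := fun n : ℕ => (n : ℝ) ^ (-(s + s₀))) ?_ ?_
      (Real.summable_nat_rpow.2 (by linarith))
    · intro n
      have := ArithmeticFunction.vonMangoldt_nonneg (n := n)
      have := Real.log_natCast_nonneg n
      positivity
    · intro n
      have h1 := ArithmeticFunction.vonMangoldt_nonneg (n := n)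
      have h2 := Real.log_natCast_nonneg n
      have h3 := ArithmeticFunction.vonMangoldt_le_log (n := n)
      rw [Real.rpow_neg (by positivity), mul_comm, ← div_div, div_eq_mul_inv]
      exact mul_le_of_le_one_left (by positivity) (div_le_one_of_le₀ h3 h2)
  have key := hasSum_integral_of_summable_integral_norm hint (by
    refine hsum.congr ?_
    intro n
    rw [← hval n]
    exact setIntegral_congr_fun measurableSet_Ioi (fun x hx => (hFnn n x hx).symm))
  rw [← tsum_mul_left, ← tsum_congr hval, key.tsum_eq]
  refine setIntegral_congr_fun measurableSet_Ioi (fun x hx => ?_)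
  have hx0 : (0 : ℝ) ≤ x := (lt_trans one_pos hx).le
  rw [tsum_eq_sum (s := Finset.Icc 1 ⌊x⌋₊), A1, Finset.sum_mul]
  · refine Finset.sum_congr rfl fun n hn => ?_
    rw [Finset.mem_Icc] at hn
    have : (n : ℝ) ≤ x := (Nat.le_floor_iff hx0).1 hn.2
    simp [hF, ha, this]
  · intro n hn
    rw [Finset.mem_Icc, not_and_or] at hn
    rcases hn with hn | hn
    · simp [hF, ha0 n (by omega)]
    · have : ¬ (n : ℝ) ≤ x := fun h => hn (Nat.le_floor h)
      simp [hF, this]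

lemma Ifun_hasSum (u : ℝ) :
    HasSum (fun k : ℕ => u ^ (k + 1) / ((k + 1) * (k + 1).factorial)) (Ifun u) := by
  have h := intervalIntegral.hasSum_integral_of_dominated_convergence (μ := volume)
    (a := 0) (b := u) (f := fun v => (Real.exp v - 1) / v)
    (F := fun (k : ℕ) v => v ^ k / (k + 1).factorial)
    (fun k _ => |u| ^ k / k.factorial) ?_ ?_ ?_ ?_ ?_
  · unfold Ifun
    refine (congrArg (fun f => HasSum f _) (funext fun k => ?_)).mp h
    rw [intervalIntegral.integral_div, integral_pow]
    field_simp
    simp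
  · intro n
    fun_prop
  · intro n
    refine Filter.Eventually.of_forall fun t ht => ?_
    have : |t| ≤ |u| := by
      rcases Set.mem_uIoc.1 ht with h | h
      · rw [abs_of_pos h.1, abs_of_pos (h.1.trans_le h.2)]; exact h.2
      · rw [abs_of_nonpos h.2, abs_of_neg (h.1.trans_le h.2)]; linarith
    rw [norm_div, norm_pow, Real.norm_eq_abs, Real.norm_natCast]
    gcongr
    omega
  · exact Filter.Eventually.of_forall fun t ht => Real.summable_pow_div_factorial _
  · simp
  · have : ∀ᵐ t : ℝ, t ≠ 0 := by simp [ae_iff]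
    filter_upwards [this] with t ht _
    have h := NormedSpace.expSeries_div_hasSum_exp t
    rw [← Real.exp_eq_exp_ℝ, ← hasSum_nat_add_iff' 1] at h
    have h2 := h.div_const t
    simp only [Finset.range_one, Finset.sum_singleton, pow_zero, Nat.factorial_zero, Nat.cast_one,
      div_one] at h2
    refine (congrArg (fun f => HasSum f _) (funext fun k => ?_)).mp h2
    rw [pow_succ]; field_simp

lemma A2_aux (s₀ : ℝ) (hs₀1 : s₀ < 1) (s : ℝ) (hs : 1 - s₀ < s) :
    (∫ x in Set.Ioi (1 : ℝ), A2 s₀ x * x ^ (-s - 1)) =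
        (1 / s) * Real.log (s / (s + s₀ - 1)) := by
  have hspos : 0 < s := by linarith
  have himg : Set.Ioi (1 : ℝ) = Real.exp '' Set.Ioi 0 := by
    ext x
    constructor
    · intro hx
      exact ⟨Real.log x, Real.log_pos hx, Real.exp_log (lt_trans one_pos hx)⟩
    · rintro ⟨y, hy, rfl⟩
      exact Real.one_lt_exp_iff.2 hy
  rw [himg, integral_image_eq_integral_abs_deriv_smul measurableSet_Ioi
    (fun x _ => (Real.hasDerivAt_exp x).hasDerivWithinAt) Real.exp_injective.injOn]
  set c := 1 - s₀ with hc
  have hc0 : 0 < c := by linarith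
  set F : ℕ → ℝ → ℝ := fun k t =>
    (c ^ (k + 1) / ((k + 1) * (k + 1).factorial)) * (t ^ ((k + 2 : ℝ) - 1) * Real.exp (-(s * t)))
    with hF
  have hint : ∀ k, Integrable (F k) (volume.restrict (Set.Ioi (0 : ℝ))) := by
    intro k
    refine Integrable.const_mul ?_ _
    have := integrableOn_rpow_mul_exp_neg_mul_rpow (p := 1) (s := (k + 2 : ℝ) - 1) (b := s)
      (by have : (0 : ℝ) ≤ k := by positivity
          linarith) one_pos hspos
    simpa [IntegrableOn] using this
  have hval : ∀ k, ∫ x in Set.Ioi (0 : ℝ), F k x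
      = (1 / s) * ((c / s) ^ (k + 1) / (k + 1)) := by
    intro k
    simp only [hF]
    rw [integral_const_mul, Real.integral_rpow_mul_exp_neg_mul_Ioi (by positivity) hspos,
      show (k + 2 : ℝ) = ((k + 1 : ℕ) : ℝ) + 1 by push_cast; ring, Real.Gamma_nat_eq_factorial]
    rw [show ((k + 1 : ℕ) : ℝ) + 1 = ((k + 2 : ℕ) : ℝ) by push_cast; ring, Real.rpow_natCast]
    have : ((k + 1).factorial : ℝ) ≠ 0 := by positivity
    rw [one_div, inv_pow, div_pow, pow_succ s (k + 1)]
    field_simp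
  have hlog := (Real.hasSum_pow_div_log_of_abs_lt_one (x := c / s) (by
    rw [abs_of_pos (by positivity), div_lt_one hspos]; exact hs)).mul_left (1 / s)
  have key := hasSum_integral_of_summable_integral_norm hint (by
    refine hlog.summable.congr ?_
    intro k
    rw [← hval k]
    refine setIntegral_congr_fun measurableSet_Ioi (fun x hx => ?_)
    have : (0 : ℝ) < x := hx
    exact (Real.norm_of_nonneg (by simp only [hF]; positivity)).symm)
  have h1 := (funext hval ▸ key).unique hlog
  have h2 : -Real.log (1 - c / s) = Real.log (s / (s + s₀ - 1)) := by
    rw [← Real.log_inv]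
    congr 1
    rw [one_sub_div hspos.ne', inv_div]
    congr 1
    rw [hc]; ring
  rw [← h2, ← h1]
  refine setIntegral_congr_fun measurableSet_Ioi (fun t ht => ?_)
  have ht : (0 : ℝ) < t := ht
  have h3 := (Ifun_hasSum (c * t)).mul_right (Real.exp (-(s * t)))
  have h4 : HasSum (fun k => F k t) (Ifun (c * t) * Real.exp (-(s * t))) := by
    refine (congrArg (fun f => HasSum f _) (funext fun k => ?_)).mp h3
    simp only [hF]
    rw [show (k + 2 : ℝ) - 1 = ((k + 1 : ℕ) : ℝ) by push_cast; ring, Real.rpow_natCast, mul_pow]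
    ring
  rw [h4.tsum_eq, A2, Real.log_exp, abs_of_pos (Real.exp_pos _), smul_eq_mul, ← Real.exp_mul,
    mul_left_comm, ← Real.exp_add]
  congr 2
  ring

/-- Mellin transform computations: for fixed `s₀ ∈ (0,1)` and real `s > 1 - s₀`,
`∫₁^∞ A₁(x) x^{-s-1} dx = (1/s) log ζ(s+s₀)` and
`∫₁^∞ A₂(x) x^{-s-1} dx = (1/s) log(s/(s+s₀-1))`. -/
theorem stmt16 (s₀ : ℝ) (hs₀0 : 0 < s₀) (hs₀1 : s₀ < 1) :
    ∀ s : ℝ, 1 - s₀ < s →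
      (∫ x in Set.Ioi (1 : ℝ), A1 s₀ x * x ^ (-s - 1)) =
        (1 / s) * Real.log ((riemannZeta ((s + s₀ : ℝ) : ℂ)).re) ∧
      (∫ x in Set.Ioi (1 : ℝ), A2 s₀ x * x ^ (-s - 1)) =
        (1 / s) * Real.log (s / (s + s₀ - 1)) := by
  intro s hs
  exact ⟨A1_aux s₀ s hs (by linarith), A2_aux s₀ hs₀1 s hs⟩
end

section
/- Let Θ ∈ [1/2,1] be the supremum of the real parts of the non-trivial zeros of ζ. Fix s₀ ∈ (0,Θ) and ε > 0, and set Δ(x) := Σ_{n ≤ x} Λ(n)/( n^{s₀} log n ) − I((1−s₀) log x). Then Δ(x) = Ω_±(x^{Θ−s₀−ε}): for every X there exist x₁, x₂ ≥ X with Δ(x₁) > x₁^{Θ−s₀−ε} and Δ(x₂) < −x₂^{Θ−s₀−ε}. -/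
open Real
open scoped ArithmeticFunction.vonMangoldt

/-- `Δ(x) = ∑_{n ≤ x} Λ(n)/(n^{s₀} log n) - I((1-s₀) log x)`. -/
noncomputable def Delta (s₀ x : ℝ) : ℝ :=
  (∑ n ∈ Finset.Icc 1 ⌊x⌋₊, Λ n / ((n : ℝ) ^ s₀ * Real.log n)) -
    Ifun ((1 - s₀) * Real.log x)


open MeasureTheory ProbabilityTheory Filter Topology Set

noncomputable def nlog (x : ℝ) : ℝ := -Real.log x

noncomputable def mu (g : ℝ → ℝ) : Measure ℝ :=
  (volume.restrict (Ioi 1)).withDensity (fun x => ENNReal.ofReal (g x / x))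

lemma nlog_meas : Measurable nlog := Real.measurable_log.neg

lemma mu_ae (g : ℝ → ℝ) : ∀ᵐ x ∂(mu g), 1 < x := by
  have h : mu g ≪ volume.restrict (Ioi 1) := withDensity_absolutelyContinuous _ _
  exact h.ae_le (ae_restrict_mem measurableSet_Ioi)

lemma mu_ae_nlog (g : ℝ → ℝ) : ∀ᵐ x ∂(mu g), nlog x ≤ 0 := by
  filter_upwards [mu_ae g] with x hx
  have := Real.log_pos hx
  simp only [nlog]; linarith

lemma exp_nlog {x : ℝ} (hx : 1 < x) (w : ℂ) : (1 / (x : ℂ)) * Complex.exp (w * nlog x)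
    = (x : ℂ) ^ (-(w + 1)) := by
  have h0 : (x : ℂ) ≠ 0 := by exact_mod_cast (by linarith : x ≠ 0)
  rw [neg_add, Complex.cpow_add _ _ h0, Complex.cpow_neg_one, Complex.cpow_def_of_ne_zero h0,
    nlog, ← Complex.ofReal_log (by linarith)]
  rw [mul_comm, one_div]; congr 2; push_cast; ring

lemma mu_integral (g : ℝ → ℝ) (hg : Measurable g) (hpos : ∀ x, 1 < x → 0 ≤ g x) (h : ℝ → ℂ) :
    ∫ x, h x ∂(mu g) = ∫ x in Ioi (1 : ℝ), (g x : ℂ) * ((1 / (x : ℂ)) * h x) := by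
  unfold mu
  have hm : Measurable (fun x => (g x / x).toNNReal) := by fun_prop
  rw [show (fun x => ENNReal.ofReal (g x / x)) = fun x => (((g x / x).toNNReal : NNReal) : ENNReal) from rfl,
    integral_withDensity_eq_integral_smul hm]
  refine setIntegral_congr_fun measurableSet_Ioi fun x hx => ?_
  have hx1 : (1:ℝ) < x := hx
  have : 0 ≤ g x / x := div_nonneg (hpos x hx) (by linarith)
  simp only [NNReal.smul_def, Real.coe_toNNReal _ this, Complex.real_smul]
  push_cast; ring

lemma mu_cmgf (g : ℝ → ℝ) (hg : Measurable g) (hpos : ∀ x, 1 < x → 0 ≤ g x) (w : ℂ) :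
    complexMGF nlog (mu g) w = ∫ x in Ioi (1 : ℝ), (g x : ℂ) * (x : ℂ) ^ (-(w + 1)) := by
  rw [complexMGF, mu_integral g hg hpos]
  refine setIntegral_congr_fun measurableSet_Ioi fun x hx => ?_
  simp only [exp_nlog hx]

lemma mellin_int (g : ℝ → ℝ) (hg : Measurable g) (C a : ℝ)
    (hb : ∀ x, 1 < x → |g x| ≤ C * x ^ a) (w : ℂ) (hw : a < w.re) :
    IntegrableOn (fun x : ℝ => (g x : ℂ) * (x : ℂ) ^ (-(w + 1))) (Ioi 1) := by
  have h1 : IntegrableOn (fun x : ℝ => C * x ^ (a - w.re - 1)) (Ioi 1) :=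
    (integrableOn_Ioi_rpow_of_lt (by linarith) zero_lt_one).const_mul C
  refine Integrable.mono' h1 ?_ ?_
  · exact (by fun_prop : Measurable fun x : ℝ => (g x : ℂ) * (x : ℂ) ^ (-(w + 1))).aestronglyMeasurable
  · refine (ae_restrict_mem measurableSet_Ioi).mono fun x hx => ?_
    have hx1 : (1:ℝ) < x := hx
    have hx0 : 0 < x := by linarith
    rw [norm_mul, Complex.norm_cpow_eq_rpow_re_of_pos hx0, Complex.norm_real, Real.norm_eq_abs]
    calc |g x| * x ^ (-(w+1)).re ≤ (C * x ^ a) * x ^ (-(w+1)).re := by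
          gcongr; exact hb x hx1
      _ = C * x ^ (a - w.re - 1) := by
          rw [mul_assoc, ← Real.rpow_add hx0]; congr 2; simp; ring

lemma mu_expset_iff (g : ℝ → ℝ) (hg : Measurable g) (hpos : ∀ x, 1 < x → 0 ≤ g x) (t : ℝ) :
    t ∈ integrableExpSet nlog (mu g) ↔
      IntegrableOn (fun x : ℝ => (g x : ℂ) * (x : ℂ) ^ (-((t : ℂ) + 1))) (Ioi 1) := by
  have hm : Measurable (fun x => (g x / x).toNNReal) := by fun_prop
  have e1 : t ∈ integrableExpSet nlog (mu g) ↔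
      Integrable (fun x => Complex.exp (t * nlog x)) (mu g) := by
    simp only [integrableExpSet, mem_ofPred_eq]
    rw [← integrable_norm_iff (f := fun x => Complex.exp (t * nlog x))]
    · simp [Complex.norm_exp]
    · have := nlog_meas
      exact (by fun_prop : Measurable fun x : ℝ => Complex.exp (t * nlog x)).aestronglyMeasurable
  rw [e1]; unfold mu
  rw [show (fun x => ENNReal.ofReal (g x / x)) = fun x => (((g x / x).toNNReal : NNReal) : ENNReal) from rfl,
    integrable_withDensity_iff_integrable_smul hm]
  refine integrableOn_congr_fun (fun x hx => ?_) measurableSet_Ioi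
  have hx1 : (1:ℝ) < x := hx
  have : 0 ≤ g x / x := div_nonneg (hpos x hx) (by linarith)
  simp only [NNReal.smul_def, Real.coe_toNNReal _ this, Complex.real_smul]
  rw [← exp_nlog hx1]
  push_cast; ring

lemma mu_expset (g : ℝ → ℝ) (hg : Measurable g) (hpos : ∀ x, 1 < x → 0 ≤ g x) (C a : ℝ)
    (hb : ∀ x, 1 < x → |g x| ≤ C * x ^ a) : Ioi a ⊆ integrableExpSet nlog (mu g) := by
  intro t ht
  rw [mu_expset_iff g hg hpos]
  exact mellin_int g hg C a hb _ (by simpa using ht)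

lemma mu_expset_int (g : ℝ → ℝ) (hg : Measurable g) (hpos : ∀ x, 1 < x → 0 ≤ g x) (C a : ℝ)
    (hb : ∀ x, 1 < x → |g x| ≤ C * x ^ a) : Ioi a ⊆ interior (integrableExpSet nlog (mu g)) :=
  interior_maximal (mu_expset g hg hpos C a hb) isOpen_Ioi

lemma mu_expset_up (g : ℝ → ℝ) {t u : ℝ} (ht : t ∈ integrableExpSet nlog (mu g)) (htu : t ≤ u) :
    u ∈ integrableExpSet nlog (mu g) := by
  simp only [integrableExpSet, mem_ofPred_eq] at ht ⊢
  have := nlog_meas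
  refine ht.mono' (by fun_prop) ?_
  filter_upwards [mu_ae_nlog g] with x hx
  rw [Real.norm_eq_abs, abs_of_pos (Real.exp_pos _)]
  exact Real.exp_le_exp.mpr (by nlinarith)

/-- Landau's lemma. -/
lemma landau_s17 {X : ℝ → ℝ} {μ : Measure ℝ} (hX0 : ∀ᵐ x ∂μ, X x ≤ 0)
    {a r t : ℝ} (ha : a ∈ interior (integrableExpSet X μ)) {K : ℂ → ℂ}
    (hK : DifferentiableOn ℂ K (Metric.ball (a : ℂ) r))
    (hKe : K =ᶠ[𝓝 (a : ℂ)] complexMGF X μ) (ht0 : 0 < t) (htr : t < r) :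
    a - t ∈ integrableExpSet X μ := by
  have hXm : AEMeasurable X μ := aemeasurable_of_mem_interior_integrableExpSet ha
  have hs := Complex.hasSum_taylorSeries_on_ball hK (z := ((a - t : ℝ) : ℂ))
    (by simp [abs_of_pos ht0, htr])
  set F : ℕ → ℝ → ℝ := fun n x => (t * (-X x)) ^ n / (n.factorial : ℝ) * Real.exp (a * X x) with hF
  have hFi : ∀ n, Integrable (F n) μ := by
    intro n
    have := (integrable_pow_mul_exp_of_mem_interior_integrableExpSet ha n).const_mul ((-t)^n / n.factorial)
    refine this.congr (ae_of_all _ fun x => ?_)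
    simp only [hF]
    rw [show t * (-X x) = (-t) * X x by ring, mul_pow]; ring
  have hs2 : Summable (fun n => ∫ x, F n x ∂μ) := by
    rw [← Complex.summable_ofReal]
    refine hs.summable.congr fun n => ?_
    rw [hKe.iteratedDeriv_eq n, iteratedDeriv_complexMGF (by simpa using ha), ← integral_complex_ofReal,
      smul_smul, smul_eq_mul, ← integral_const_mul]
    refine integral_congr_ae (ae_of_all _ fun x => ?_)
    simp only [hF]; push_cast
    rw [show (t : ℂ) * (-X x) = (-t) * X x by ring, mul_pow]
    rw [show (a : ℂ) - t - a = -t by ring]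
    ring
  have hpos : ∀ n, 0 ≤ᵐ[μ] F n := fun n => by
    filter_upwards [hX0] with x hx
    have : 0 ≤ t * (-X x) := mul_nonneg ht0.le (by linarith)
    simp only [hF, Pi.zero_apply]; positivity
  have hFs : ∀ x, HasSum (fun n => F n x) (Real.exp ((a - t) * X x)) := by
    intro x
    have := (NormedSpace.expSeries_div_hasSum_exp (𝔸 := ℝ) (t * (-X x))).mul_right (Real.exp (a * X x))
    rw [← Real.exp_eq_exp_ℝ, ← Real.exp_add] at this
    rwa [show t * -X x + a * X x = (a - t) * X x by ring] at this
  refine ⟨by fun_prop, ?_⟩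
  rw [hasFiniteIntegral_iff_ofReal (ae_of_all _ fun x => (Real.exp_pos _).le)]
  have : ∫⁻ x, ENNReal.ofReal (Real.exp ((a - t) * X x)) ∂μ
      = ∫⁻ x, ∑' n, ENNReal.ofReal (F n x) ∂μ := by
    refine lintegral_congr_ae ?_
    filter_upwards [hX0] with x hx
    rw [← (hFs x).tsum_eq, ENNReal.ofReal_tsum_of_nonneg _ (hFs x).summable]
    intro n
    have : 0 ≤ t * (-X x) := mul_nonneg ht0.le (by linarith)
    simp only [hF]; positivity
  rw [this, lintegral_tsum (fun n => (hFi n).aestronglyMeasurable.aemeasurable.ennreal_ofReal)]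
  have : ∀ n, ∫⁻ x, ENNReal.ofReal (F n x) ∂μ = ENNReal.ofReal (∫ x, F n x ∂μ) := fun n =>
    (ofReal_integral_eq_lintegral_ofReal (hFi n) (hpos n)).symm
  simp_rw [this]
  rw [← ENNReal.ofReal_tsum_of_nonneg (fun n => integral_nonneg_of_ae (hpos n)) hs2]
  exact ENNReal.ofReal_lt_top

lemma integral_rpw (w : ℂ) (a : ℝ) (hw : a < w.re) :
    ∫ x in Ioi (1 : ℝ), ((x ^ a : ℝ) : ℂ) * (x : ℂ) ^ (-(w + 1)) = 1 / (w - a) := by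
  have h : ∀ x ∈ Ioi (1:ℝ), ((x ^ a : ℝ) : ℂ) * (x : ℂ) ^ (-(w + 1)) = (x : ℂ) ^ ((a : ℂ) - w - 1) := by
    intro x hx
    have hx0 : (0:ℝ) < x := lt_trans zero_lt_one hx
    rw [Complex.ofReal_cpow hx0.le, ← Complex.cpow_add _ _ (by exact_mod_cast hx0.ne')]
    congr 1; ring
  rw [setIntegral_congr_fun measurableSet_Ioi h, integral_Ioi_cpow_of_lt _ zero_lt_one]
  · have : w - a ≠ 0 := fun h => by
      have := congrArg Complex.re h; simp at this; linarith
    have h2 : (a : ℂ) - w ≠ 0 := fun h => this (by linear_combination -h)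
    simp; field_simp; exact neg_sub _ _
  · simp; linarith

lemma isOpen_half (a : ℝ) : IsOpen {w : ℂ | a < w.re} := isOpen_lt continuous_const Complex.continuous_re

lemma preconn_half (a : ℝ) : IsPreconnected {w : ℂ | a < w.re} := (convex_halfSpace_re_gt a).isPreconnected

lemma ident {f g : ℂ → ℂ} {a b : ℝ} (hf : DifferentiableOn ℂ f {w : ℂ | a < w.re})
    (hg : DifferentiableOn ℂ g {w : ℂ | a < w.re}) (h : ∀ w : ℂ, b < w.re → f w = g w) :
    ∀ w : ℂ, a < w.re → f w = g w := by
  have hf' := hf.analyticOnNhd (isOpen_half a)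
  have hg' := hg.analyticOnNhd (isOpen_half a)
  have hz : a < ((max a b + 1 : ℝ) : ℂ).re := by
    rw [Complex.ofReal_re]; linarith [le_max_left a b]
  refine fun w hw => hf'.eqOn_of_preconnected_of_eventuallyEq hg' (preconn_half a) hz ?_ hw
  have : {w : ℂ | b < w.re} ∈ 𝓝 (((max a b + 1 : ℝ)) : ℂ) :=
    (isOpen_half b).mem_nhds (by
      show b < ((max a b + 1 : ℝ) : ℂ).re
      rw [Complex.ofReal_re]; linarith [le_max_right a b])
  filter_upwards [this] with w hw using h w hw

lemma cmgf_diff (g : ℝ → ℝ) (a : ℝ) (h : Ioi a ⊆ integrableExpSet nlog (mu g)) :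
    DifferentiableOn ℂ (complexMGF nlog (mu g)) {w : ℂ | a < w.re} :=
  differentiableOn_complexMGF.mono fun _ hw => interior_maximal h isOpen_Ioi hw

lemma zeta_formula (s : ℂ) (hs : 0 < s.re) :
    riemannZeta₁ s = s - s * (s - 1) * complexMGF nlog (mu (fun x => Int.fract x)) s := by
  have hfm : Measurable (fun x : ℝ => Int.fract x) := measurable_fract
  have hfp : ∀ x : ℝ, 1 < x → 0 ≤ Int.fract x := fun x _ => Int.fract_nonneg x
  have hfb : ∀ x : ℝ, 1 < x → |Int.fract x| ≤ 1 * x ^ (0:ℝ) := fun x _ => by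
    rw [abs_of_nonneg (Int.fract_nonneg x)]; simpa using (Int.fract_lt_one x).le
  have hd := cmgf_diff _ _ (mu_expset _ hfm hfp 1 0 hfb)
  refine ident (g := fun s => s - s * (s - 1) * complexMGF nlog (mu (fun x => Int.fract x)) s)
    (a := 0) (b := 1) differentiable_riemannZeta₁.differentiableOn ?_ ?_ s hs
  · exact differentiableOn_id.sub ((differentiableOn_id.mul (differentiableOn_id.sub_const 1)).mul hd)
  intro w hw
  have hw1 : w ≠ 1 := fun h => by rw [h] at hw; simp at hw
  have hw1' : w - 1 ≠ 0 := sub_ne_zero.mpr hw1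
  have hz : riemannZeta₁ w = (w - 1) * riemannZeta w := by
    rw [riemannZeta_eq_inv_sub_mul hw1]; field_simp
  have hL := LSeries_eq_mul_integral_of_nonneg (fun _ => 1) (r := 1) zero_le_one hw (by
    simp only [Finset.sum_const, Nat.card_Icc, Real.rpow_one]
    simpa using Asymptotics.isBigO_refl _ _) (fun _ => zero_le_one)
  have h1 : LSeries (fun _ : ℕ => ((1 : ℝ) : ℂ)) w = riemannZeta w := by
    rw [← LSeries_one_eq_riemannZeta hw, Complex.ofReal_one]; rfl
  rw [h1] at hL
  rw [hz, hL, mu_cmgf _ hfm hfp]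
  have e : ∀ x ∈ Ioi (1:ℝ), (∑ k ∈ Finset.Icc 1 ⌊x⌋₊, ((1:ℝ) : ℂ)) * (x : ℂ) ^ (-(w + 1))
      = ((x ^ (1:ℝ) : ℝ) : ℂ) * (x : ℂ) ^ (-(w + 1)) - ((Int.fract x : ℝ) : ℂ) * (x : ℂ) ^ (-(w + 1)) := by
    intro x hx
    have hx0 : (0:ℝ) ≤ x := (zero_lt_one.trans hx).le
    have : ((⌊x⌋₊ : ℝ)) = x - Int.fract x := by
      rw [natCast_floor_eq_intCast_floor hx0]; linarith [Int.floor_add_fract x]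
    rw [← sub_mul]; congr 1
    simp only [Finset.sum_const, Nat.card_Icc]
    rw [Real.rpow_one]
    simp
    exact_mod_cast this
  rw [setIntegral_congr_fun measurableSet_Ioi e, integral_sub, integral_rpw w 1 hw]
  · push_cast; field_simp
  · exact mellin_int (fun x => x ^ (1:ℝ)) (by fun_prop) 1 1 (fun x hx => by
      rw [abs_of_nonneg (Real.rpow_nonneg (by linarith) _)]; simp) w hw
  · exact mellin_int _ hfm 1 0 hfb w (by linarith)

lemma zeta1_ne (x : ℝ) (hx : 0 < x) : riemannZeta₁ (x : ℂ) ≠ 0 := by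
  rcases lt_or_ge x 1 with h | h
  · rw [zeta_formula _ (by simpa using hx), complexMGF_ofReal]
    have h0 : 0 ≤ mgf nlog (mu fun x => Int.fract x) x := mgf_nonneg
    have : 0 < x - x * (x - 1) * mgf nlog (mu fun x => Int.fract x) x := by
      nlinarith [mul_nonneg (mul_nonneg hx.le (sub_nonneg.mpr h.le)) h0]
    exact_mod_cast this.ne'
  · rcases eq_or_lt_of_le h with h | h
    · rw [← h]; simp
    · have h1 : (x : ℂ) ≠ 1 := by exact_mod_cast h.ne'
      have := riemannZeta_ne_zero_of_one_lt_re (s := (x : ℂ)) (by simpa using h)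
      intro h2
      rw [riemannZeta_eq_inv_sub_mul h1, h2, mul_zero] at this
      exact this rfl

lemma abs_h_le (v : ℝ) : |(Real.exp v - 1) / v| ≤ Real.exp |v| := by
  rcases eq_or_ne v 0 with rfl | hv
  · simp
  rw [abs_div, div_le_iff₀ (abs_pos.mpr hv)]
  rcases lt_or_gt_of_ne hv with h | h
  · rw [abs_of_neg h, abs_of_nonpos (by linarith [Real.exp_le_one_iff.mpr h.le])]
    have := Real.add_one_le_exp v
    have h2 : 1 ≤ Real.exp (-v) := Real.one_le_exp (by linarith)
    nlinarith
  · rw [abs_of_pos h, abs_of_nonneg (by linarith [Real.one_lt_exp_iff.mpr h])]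
    have := Real.add_one_le_exp (-v)
    have h2 : Real.exp (-v) * Real.exp v = 1 := by rw [← Real.exp_add]; simp
    nlinarith [Real.exp_pos v]

lemma h_nonneg {v : ℝ} (hv : 0 ≤ v) : 0 ≤ (Real.exp v - 1) / v :=
  div_nonneg (by linarith [Real.one_le_exp hv]) hv

lemma h_meas : Measurable (fun v : ℝ => (Real.exp v - 1) / v) := by fun_prop

lemma h_int (a b : ℝ) : IntervalIntegrable (fun v : ℝ => (Real.exp v - 1) / v) volume a b := by
  have : IntervalIntegrable (fun v : ℝ => Real.exp |v|) volume a b :=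
    (by fun_prop : Continuous fun v : ℝ => Real.exp |v|).intervalIntegrable a b
  refine this.mono_fun h_meas.aestronglyMeasurable (ae_of_all _ fun v => ?_)
  beta_reduce
  rw [Real.norm_eq_abs, Real.norm_eq_abs, abs_of_pos (Real.exp_pos _)]
  exact abs_h_le v

lemma Ifun_cont : Continuous Ifun := intervalIntegral.continuous_primitive h_int 0

lemma Ifun_zero : Ifun 0 = 0 := by simp [Ifun]

lemma Ifun_deriv {s : ℝ} (hs : 0 < s) : HasDerivAt Ifun ((Real.exp s - 1) / s) s := by
  refine intervalIntegral.integral_hasDerivAt_right (h_int 0 s)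
    h_meas.stronglyMeasurable.stronglyMeasurableAtFilter ?_
  have : s ≠ 0 := hs.ne'
  fun_prop (disch := assumption)

lemma Ifun_mono {a b : ℝ} (ha : 0 ≤ a) (hab : a ≤ b) : Ifun a ≤ Ifun b := by
  have h := intervalIntegral.integral_add_adjacent_intervals (h_int 0 a) (h_int a b)
  have h2 : 0 ≤ ∫ v in a..b, (Real.exp v - 1) / v :=
    intervalIntegral.integral_nonneg hab fun u hu => h_nonneg (ha.trans hu.1)
  simp only [Ifun]; linarith

lemma Ifun_nonneg {a : ℝ} (ha : 0 ≤ a) : 0 ≤ Ifun a := by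
  rw [← Ifun_zero]; exact Ifun_mono le_rfl ha

lemma Ifun_le {a : ℝ} (ha : 0 ≤ a) : Ifun a ≤ Real.exp a := by
  have h : Ifun a ≤ ∫ v in (0:ℝ)..a, Real.exp v := by
    refine intervalIntegral.integral_mono_on ha (h_int 0 a) (Real.continuous_exp.intervalIntegrable _ _) ?_
    intro v hv
    have := (le_abs_self _).trans (abs_h_le v)
    rwa [abs_of_nonneg hv.1] at this
  rw [integral_exp] at h
  simp at h; linarith

lemma Ic_bound {c x : ℝ} (hc : 0 < c) (hc1 : c < 1) (hx : 1 ≤ x) :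
    |Ifun (c * Real.log x)| ≤ 1 * x ^ (1:ℝ) := by
  have hl := Real.log_nonneg hx
  have h0 : 0 ≤ c * Real.log x := by positivity
  rw [abs_of_nonneg (Ifun_nonneg h0), Real.rpow_one, one_mul]
  refine (Ifun_le h0).trans ?_
  calc Real.exp (c * Real.log x) ≤ Real.exp (Real.log x) := Real.exp_le_exp.mpr (by nlinarith)
    _ = x := Real.exp_log (by linarith)

lemma Ic_meas (c : ℝ) : Measurable (fun x => Ifun (c * Real.log x)) :=
  Ifun_cont.measurable.comp (by fun_prop)

noncomputable def g2 (c x : ℝ) : ℝ := c * ((Real.exp (c * Real.log x) - 1) / (c * Real.log x))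

lemma g2_meas (c : ℝ) : Measurable (g2 c) := by unfold g2; fun_prop

lemma g2_nonneg {c : ℝ} (hc : 0 < c) (x : ℝ) (hx : 1 < x) : 0 ≤ g2 c x :=
  mul_nonneg hc.le (h_nonneg (mul_nonneg hc.le (Real.log_nonneg hx.le)))

lemma g2_bound {c : ℝ} (hc : 0 < c) (hc1 : c < 1) (x : ℝ) (hx : 1 < x) : |g2 c x| ≤ 1 * x ^ (1:ℝ) := by
  have hl := Real.log_nonneg hx.le
  have h0 : 0 ≤ c * Real.log x := by positivity
  rw [Real.rpow_one, one_mul, g2, abs_mul, abs_of_pos hc]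
  have := abs_h_le (c * Real.log x)
  rw [abs_of_nonneg h0] at this
  calc _ ≤ c * Real.exp (c * Real.log x) := by gcongr
    _ ≤ 1 * Real.exp (c * Real.log x) := by gcongr
    _ ≤ Real.exp (Real.log x) := by rw [one_mul]; exact Real.exp_le_exp.mpr (by nlinarith)
    _ = x := Real.exp_log (by linarith)

lemma J_eq {c : ℝ} (hc : 0 < c) (hc1 : c < 1) (w : ℂ) (hw : 1 < w.re) :
    w * ∫ x in Ioi (1:ℝ), (Ifun (c * Real.log x) : ℂ) * (x : ℂ) ^ (-(w + 1))
      = complexMGF nlog (mu (g2 c)) w := by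
  rw [mu_cmgf _ (g2_meas c) (g2_nonneg hc)]
  have i1 := mellin_int _ (Ic_meas c) 1 1 (fun x hx => Ic_bound hc hc1 hx.le) w hw
  have i2 := mellin_int _ (g2_meas c) 1 1 (g2_bound hc hc1) w hw
  have hint := i2.sub (i1.const_mul w)
  have key := integral_Ioi_of_hasDerivAt_of_tendsto (a := (1:ℝ)) (m := 0)
    (f := fun x : ℝ => (Ifun (c * Real.log x) : ℂ) * (x : ℂ) ^ (-w)) ?_ ?_ hint ?_
  · have e := integral_sub i2 (i1.const_mul w)
    rw [integral_const_mul] at e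
    simp only [Real.log_one, mul_zero, Ifun_zero, Complex.ofReal_zero, zero_mul, sub_zero] at key
    have k2 := e.symm.trans key
    exact (sub_eq_zero.mp k2).symm
  · refine ContinuousAt.continuousWithinAt ?_
    refine ContinuousAt.mul ?_ ?_
    · refine Complex.continuous_ofReal.continuousAt.comp (Ifun_cont.continuousAt.comp ?_)
      exact continuousAt_const.mul (Real.continuousAt_log one_ne_zero)
    · exact (Complex.continuousAt_ofReal_cpow_const 1 (-w) (Or.inr one_ne_zero))
  · intro x hx
    have hx1 : (1:ℝ) < x := hx
    have hx0 : 0 < x := by linarith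
    have hl := Real.log_pos hx1
    have d1 : HasDerivAt (fun x => Ifun (c * Real.log x))
        ((Real.exp (c * Real.log x) - 1) / (c * Real.log x) * (c * x⁻¹)) x :=
      HasDerivAt.comp (h₂ := Ifun) (h := fun x => c * Real.log x) x (Ifun_deriv (mul_pos hc hl)) ((Real.hasDerivAt_log hx0.ne').const_mul c)
    have d2 : HasDerivAt (fun x : ℝ => (x : ℂ) ^ (-w)) (-w * (x : ℂ) ^ (-w - 1)) x := by
      have := (hasDerivAt_id (x : ℂ)).cpow_const (c := -w) (Or.inl (by simpa using hx0))
      have := this.comp_ofReal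
      simpa using this
    have d := d1.ofReal_comp.mul d2
    refine d.congr_deriv ?_
    have hx0' : (x : ℂ) ≠ 0 := by exact_mod_cast hx0.ne'
    have e1 : (x : ℂ) ^ (-(w + 1)) = (x : ℂ) ^ (-w) * (x : ℂ)⁻¹ := by
      rw [neg_add, Complex.cpow_add _ _ hx0', Complex.cpow_neg_one]
    have e2 : (x : ℂ) ^ (-w - 1) = (x : ℂ) ^ (-w) * (x : ℂ)⁻¹ := by
      rw [sub_eq_add_neg, Complex.cpow_add _ _ hx0', Complex.cpow_neg_one]
    simp only [Pi.sub_apply]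
    rw [e1, e2, g2]
    push_cast; ring
  · have ht : Tendsto (fun x : ℝ => x ^ (-(w.re - 1))) atTop (𝓝 0) :=
      tendsto_rpow_neg_atTop (by linarith)
    refine squeeze_zero_norm' ?_ ht
    filter_upwards [eventually_gt_atTop 1] with x hx
    have hx0 : 0 < x := by linarith
    rw [norm_mul, Complex.norm_cpow_eq_rpow_re_of_pos hx0, Complex.norm_real, Real.norm_eq_abs]
    calc _ ≤ (1 * x ^ (1:ℝ)) * x ^ (-w).re := by gcongr; exact Ic_bound hc hc1 hx.le
      _ = _ := by rw [one_mul, ← Real.rpow_add hx0]; congr 1; simp; ring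

lemma J_deriv {c : ℝ} (hc : 0 < c) (hc1 : c < 1) (w : ℂ) (hw : 1 < w.re) :
    HasDerivAt (complexMGF nlog (mu (g2 c))) (1 / w - 1 / (w - c)) w := by
  have h := hasDerivAt_complexMGF (X := nlog) (μ := mu (g2 c)) (z := w)
    (mu_expset_int _ (g2_meas c) (g2_nonneg hc) 1 1 (g2_bound hc hc1) hw)
  refine h.congr_deriv ?_
  rw [mu_integral _ (g2_meas c) (g2_nonneg hc)]
  have e : ∀ x ∈ Ioi (1:ℝ), (g2 c x : ℂ) * (1 / (x : ℂ) * (nlog x * Complex.exp (w * nlog x)))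
      = ((x ^ (0:ℝ) : ℝ) : ℂ) * (x : ℂ) ^ (-(w + 1)) - ((x ^ c : ℝ) : ℂ) * (x : ℂ) ^ (-(w + 1)) := by
    intro x hx
    have hx1 : (1:ℝ) < x := hx
    have hl := (Real.log_pos hx1).ne'
    have : g2 c x * nlog x = x ^ (0:ℝ) - x ^ c := by
      rw [g2, nlog, Real.rpow_def_of_pos (by linarith : 0 < x) c, Real.rpow_zero, mul_comm (Real.log x) c]
      field_simp; ring
    rw [← sub_mul, ← exp_nlog hx1, ← Complex.ofReal_sub, ← this]
    push_cast; ring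
  rw [setIntegral_congr_fun measurableSet_Ioi e, integral_sub, integral_rpw w 0 (by linarith),
    integral_rpw w c (by linarith)]
  · simp
  · exact mellin_int (fun x => x ^ (0:ℝ)) (by fun_prop) 1 0 (fun x hx => by simp) w (by linarith)
  · exact mellin_int (fun x => x ^ c) (by fun_prop) 1 c (fun x hx => by
      rw [abs_of_nonneg (Real.rpow_nonneg (by linarith) _)]; simp) w (by linarith)

lemma J_exp {c : ℝ} (hc : 0 < c) (hc1 : c < 1) : ∃ C : ℂ, C ≠ 0 ∧ ∀ w : ℂ, 1 < w.re →
    Complex.exp (complexMGF nlog (mu (g2 c)) w) * ((w - c) / w) = C := by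
  set E : ℂ → ℂ := fun w => Complex.exp (complexMGF nlog (mu (g2 c)) w) * ((w - c) / w) with hE
  have hne : ∀ w : ℂ, 1 < w.re → w ≠ 0 ∧ w - c ≠ 0 := by
    intro w hw
    constructor <;> intro h <;> have := congrArg Complex.re h <;> simp at this <;> linarith
  have hd : ∀ w : ℂ, 1 < w.re → HasDerivAt E 0 w := by
    intro w hw
    obtain ⟨h1, h2⟩ := hne w hw
    have := (J_deriv hc hc1 w hw).cexp.mul
      (((hasDerivAt_id w).sub_const (c : ℂ)).div (hasDerivAt_id w) h1)
    refine this.congr_deriv ?_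
    simp only [id, Pi.div_apply]
    field_simp; ring
  have h2 : (1:ℝ) < (2:ℂ).re := by norm_num
  refine ⟨E 2, ?_, fun w hw => ?_⟩
  · obtain ⟨h1, h2⟩ := hne 2 h2
    exact mul_ne_zero (Complex.exp_ne_zero _) (div_ne_zero h2 h1)
  · exact (isOpen_half 1).is_const_of_deriv_eq_zero (preconn_half 1)
      (fun z hz => (hd z hz).differentiableAt.differentiableWithinAt)
      (fun z hz => (hd z hz).deriv) hw h2

noncomputable def acoef (s₀ : ℝ) (n : ℕ) : ℝ := Λ n / ((n : ℝ) ^ s₀ * Real.log n)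

noncomputable def Ssum (s₀ : ℝ) (x : ℝ) : ℝ := ∑ n ∈ Finset.Icc 1 ⌊x⌋₊, acoef s₀ n

lemma Delta_eq (s₀ x : ℝ) : Delta s₀ x = Ssum s₀ x - Ifun ((1 - s₀) * Real.log x) := rfl

lemma acoef_nonneg (s₀ : ℝ) (n : ℕ) : 0 ≤ acoef s₀ n :=
  div_nonneg ArithmeticFunction.vonMangoldt_nonneg
    (mul_nonneg (Real.rpow_nonneg (Nat.cast_nonneg n) _) (Real.log_natCast_nonneg n))

lemma acoef_le {s₀ : ℝ} (h0 : 0 < s₀) (n : ℕ) : acoef s₀ n ≤ 1 := by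
  rcases le_or_gt n 1 with h | h
  · interval_cases n <;> simp [acoef]
  · have hn : (1:ℝ) < n := by exact_mod_cast h
    have hl := Real.log_pos hn
    have hp : 1 ≤ (n:ℝ) ^ s₀ := Real.one_le_rpow hn.le h0.le
    rw [acoef, div_le_one (by positivity)]
    have := ArithmeticFunction.vonMangoldt_le_log (n := n)
    nlinarith

lemma Ssum_nonneg (s₀ x : ℝ) : 0 ≤ Ssum s₀ x := Finset.sum_nonneg fun _ _ => acoef_nonneg _ _

lemma Ssum_mono (s₀ : ℝ) {x y : ℝ} (h : x ≤ y) : Ssum s₀ x ≤ Ssum s₀ y :=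
  Finset.sum_le_sum_of_subset_of_nonneg (Finset.Icc_subset_Icc_right (Nat.floor_mono h))
    fun _ _ _ => acoef_nonneg _ _

lemma sum_acoef_le {s₀ : ℝ} (h0 : 0 < s₀) (n : ℕ) : ∑ k ∈ Finset.Icc 1 n, acoef s₀ k ≤ n := by
  have := Finset.sum_le_card_nsmul (Finset.Icc 1 n) (acoef s₀) 1 fun k _ => acoef_le h0 k
  simpa using this

lemma Ssum_bound {s₀ : ℝ} (h0 : 0 < s₀) {x : ℝ} (hx : 1 < x) : |Ssum s₀ x| ≤ 1 * x ^ (1:ℝ) := by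
  rw [abs_of_nonneg (Ssum_nonneg _ _), one_mul, Real.rpow_one]
  exact (sum_acoef_le h0 _).trans (Nat.floor_le (by linarith))

lemma Ssum_meas (s₀ : ℝ) : Measurable (Ssum s₀) :=
  (measurable_from_nat (f := fun m : ℕ => ∑ n ∈ Finset.Icc 1 m, acoef s₀ n)).comp Nat.measurable_floor

lemma Delta_meas (s₀ : ℝ) : Measurable (Delta s₀) := (Ssum_meas s₀).sub (Ic_meas (1 - s₀))

lemma Delta_bound {s₀ : ℝ} (h0 : 0 < s₀) (h1 : s₀ < 1) {x : ℝ} (hx : 1 < x) :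
    |Delta s₀ x| ≤ 2 * x ^ (1:ℝ) := by
  have a := Ssum_bound h0 hx
  have b := Ic_bound (c := 1 - s₀) (by linarith) (by linarith) hx.le
  rw [Delta_eq]
  exact (abs_sub _ _).trans (by linarith)

lemma S_exp {s₀ : ℝ} (h0 : 0 < s₀) (w : ℂ) (hw : 1 < w.re) :
    Complex.exp (w * ∫ x in Ioi (1:ℝ), (Ssum s₀ x : ℂ) * (x : ℂ) ^ (-(w + 1)))
      = riemannZeta (w + s₀) := by
  have hL := LSeries_eq_mul_integral_of_nonneg (acoef s₀) (r := 1) zero_le_one hw (by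
    refine Asymptotics.IsBigO.of_bound 1 (Eventually.of_forall fun n => ?_)
    rw [Real.norm_of_nonneg (Finset.sum_nonneg fun _ _ => acoef_nonneg _ _), Real.rpow_one, one_mul,
      Real.norm_of_nonneg (Nat.cast_nonneg n)]
    exact sum_acoef_le h0 n) (acoef_nonneg s₀)
  have e : LSeries (fun n => (acoef s₀ n : ℂ)) w
      = LSeries (fun n : ℕ => (Λ n : ℂ) / (Real.log n : ℂ)) (w + s₀) := by
    unfold LSeries
    congr 1; ext n
    rcases Nat.eq_zero_or_pos n with rfl | hn
    · simp
    rw [LSeries.term_of_ne_zero hn.ne', LSeries.term_of_ne_zero hn.ne', acoef,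
      Complex.cpow_add _ _ (by exact_mod_cast hn.ne')]
    push_cast
    rw [Complex.ofReal_cpow (Nat.cast_nonneg n)]
    push_cast
    rw [div_div, div_div]; congr 1; ring
  rw [← riemannZeta_eq_exp_LSeries (by simp; linarith), ← e, hL]
  congr 2
  refine setIntegral_congr_fun measurableSet_Ioi fun x _ => ?_
  simp [Ssum]

lemma Delta_exp {s₀ : ℝ} (h0 : 0 < s₀) (h1 : s₀ < 1) : ∃ C : ℂ, C ≠ 0 ∧ ∀ w : ℂ, 1 < w.re →
    Complex.exp (w * ∫ x in Ioi (1:ℝ), (Delta s₀ x : ℂ) * (x : ℂ) ^ (-(w + 1))) * w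
      = C * riemannZeta₁ (w + s₀) := by
  have hc : 0 < 1 - s₀ := by linarith
  have hc1 : 1 - s₀ < 1 := by linarith
  obtain ⟨C, hC, h⟩ := J_exp hc hc1
  refine ⟨C⁻¹, inv_ne_zero hC, fun w hw => ?_⟩
  have hJ := h w hw
  have hS := S_exp h0 w hw
  rw [← J_eq hc hc1 w hw] at hJ
  have e : ∫ x in Ioi (1:ℝ), (Delta s₀ x : ℂ) * (x : ℂ) ^ (-(w + 1))
      = (∫ x in Ioi (1:ℝ), (Ssum s₀ x : ℂ) * (x : ℂ) ^ (-(w + 1)))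
        - ∫ x in Ioi (1:ℝ), (Ifun ((1 - s₀) * Real.log x) : ℂ) * (x : ℂ) ^ (-(w + 1)) := by
    rw [← integral_sub (mellin_int _ (Ssum_meas s₀) 1 1 (fun x hx => Ssum_bound h0 hx) w hw)
      (mellin_int _ (Ic_meas _) 1 1 (fun x hx => Ic_bound hc hc1 hx.le) w hw)]
    refine setIntegral_congr_fun measurableSet_Ioi fun x _ => ?_
    simp only [Delta_eq]; push_cast; ring
  have hs1 : w + s₀ ≠ 1 := fun h => by
    have := congrArg Complex.re h; simp at this; linarith
  have hs1' : w + s₀ - 1 ≠ 0 := sub_ne_zero.mpr hs1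
  have hw0 : w ≠ 0 := fun h => by rw [h] at hw; simp at hw; linarith
  rw [e, mul_sub, Complex.exp_sub, hS, riemannZeta_eq_inv_sub_mul hs1]
  rw [← hJ]
  push_cast
  have : w - (1 - (s₀ : ℂ)) = w + s₀ - 1 := by ring
  rw [this]
  field_simp

lemma log_const {D : ℂ → ℂ} {V : Set ℂ} (hV : IsOpen V) (hc : IsPreconnected V)
    (hD : DifferentiableOn ℂ D V) {k : ℂ} (hk : ∀ w ∈ V, Complex.exp (D w) = k) {a : ℂ} (ha : a ∈ V) :
    ∀ w ∈ V, D w = D a := by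
  intro w hw
  refine hV.is_const_of_deriv_eq_zero hc hD (fun z hz => ?_) hw ha
  have hd := (hD.differentiableAt (hV.mem_nhds hz)).hasDerivAt.cexp
  have h2 : HasDerivAt (fun w => Complex.exp (D w)) 0 z := by
    refine (hasDerivAt_const z k).congr_of_eventuallyEq ?_
    filter_upwards [hV.mem_nhds hz] with y hy using hk y hy
  have := hd.unique h2
  exact (mul_eq_zero.mp this).resolve_left (Complex.exp_ne_zero _)

lemma main_lemma {s₀ : ℝ} (h0 : 0 < s₀) (h1 : s₀ < 1) {σ α c : ℝ} (hσ : σ * σ = 1)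
    (hα : 0 < α) (hα1 : α < 1)
    (hb : ∀ x, 1 < x → σ * Delta s₀ x ≤ c * x ^ α) (s : ℂ) (hs : s₀ + α < s.re) :
    riemannZeta₁ s ≠ 0 := by
  obtain ⟨C, hC, hexp⟩ := Delta_exp h0 h1
  have hσa : |σ| = 1 := by
    rcases mul_self_eq_one_iff.mp hσ with h | h <;> simp [h]
  set g : ℝ → ℝ := fun x => c * x ^ α - σ * Delta s₀ x with hg
  have gm : Measurable g := by have := Delta_meas s₀; fun_prop
  have gp : ∀ x, 1 < x → 0 ≤ g x := fun x hx => sub_nonneg.mpr (hb x hx)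
  have gb : ∀ x, 1 < x → |g x| ≤ (|c| + 2) * x ^ (1:ℝ) := by
    intro x hx
    have hx0 : 0 < x := by linarith
    have e1 := Delta_bound h0 h1 hx
    have e2 : x ^ α ≤ x ^ (1:ℝ) := Real.rpow_le_rpow_of_exponent_le hx.le hα1.le
    have e3 : |c * x ^ α| ≤ |c| * x ^ (1:ℝ) := by
      rw [abs_mul, abs_of_nonneg (Real.rpow_nonneg hx0.le α)]; gcongr
    have e4 : |σ * Delta s₀ x| ≤ 2 * x ^ (1:ℝ) := by rw [abs_mul, hσa, one_mul]; exact e1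
    exact (abs_sub _ _).trans (by linarith)
  set T := integrableExpSet nlog (mu g) with hT
  have hT1 : Ioi 1 ⊆ T := mu_expset g gm gp _ 1 gb
  set F := complexMGF nlog (mu g) with hF
  set A : ℂ → ℂ := fun w => σ * (c * w / (w - α) - w * F w) with hA
  have hAe : ∀ w : ℂ, 1 < w.re → Complex.exp (A w) * w = C * riemannZeta₁ (w + s₀) := by
    intro w hw
    rw [← hexp w hw]
    congr 2
    have : F w = c * (1 / (w - α)) -
        σ * ∫ x in Ioi (1:ℝ), (Delta s₀ x : ℂ) * (x : ℂ) ^ (-(w + 1)) := by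
      rw [hF, mu_cmgf g gm gp, ← integral_rpw w α (by linarith), ← integral_const_mul,
        ← integral_const_mul, ← integral_sub]
      · refine setIntegral_congr_fun measurableSet_Ioi fun x _ => ?_
        simp only [hg]; push_cast; ring
      · exact (mellin_int (fun x => x ^ α) (by fun_prop) 1 α (fun x hx => by
          rw [abs_of_nonneg (Real.rpow_nonneg (by linarith) _)]; simp) w (by linarith)).const_mul _
      · exact (mellin_int _ (Delta_meas s₀) 2 1 (fun x hx => Delta_bound h0 h1 hx) w hw).const_mul _
    have hσ' : (σ : ℂ) * σ = 1 := by exact_mod_cast hσ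
    simp only [hA, this]
    linear_combination (w * ∫ x in Ioi (1:ℝ), (Delta s₀ x : ℂ) * (x : ℂ) ^ (-(w + 1))) * hσ'
  have hwα : ∀ w : ℂ, α < w.re → w - α ≠ 0 ∧ w ≠ 0 := by
    intro w hw
    constructor <;> intro h <;> have := congrArg Complex.re h <;> simp at this <;> linarith
  have hAd : ∀ b, α ≤ b → Ioi b ⊆ T → DifferentiableOn ℂ A {w : ℂ | b < w.re} := by
    intro b hb hbT
    have hFd : DifferentiableOn ℂ F {w : ℂ | b < w.re} := cmgf_diff g b hbT
    refine DifferentiableOn.const_mul (DifferentiableOn.sub ?_ (differentiableOn_id.mul hFd)) _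
    refine DifferentiableOn.div (differentiableOn_id.const_mul _) (differentiableOn_id.sub_const _) ?_
    intro w hw
    exact (hwα w (lt_of_le_of_lt hb hw)).1
  have hAe' : ∀ b, α ≤ b → Ioi b ⊆ T → ∀ w : ℂ, b < w.re →
      Complex.exp (A w) * w = C * riemannZeta₁ (w + s₀) := by
    intro b hb hbT
    refine ident (f := fun w => Complex.exp (A w) * w) (g := fun w => C * riemannZeta₁ (w + s₀))
      (b := 1) ((hAd b hb hbT).cexp.mul differentiableOn_id) ?_ hAe
    exact (differentiable_riemannZeta₁.comp (differentiable_id.add_const _)).differentiableOn.const_mul _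
  have hαT : Ioi α ⊆ T := by
    intro p hp
    by_contra hpT
    have hlow : ∀ t ∈ T, p ≤ t := by
      intro t ht
      by_contra h
      exact hpT (mu_expset_up g ht (not_le.mp h).le)
    have hne : T.Nonempty := ⟨2, hT1 (by norm_num)⟩
    have hbdd : BddBelow T := ⟨p, hlow⟩
    set q := sInf T with hq
    have hpq : p ≤ q := le_csInf hne hlow
    have hαq : α < q := lt_of_lt_of_le hp hpq
    have hq0 : 0 < q := hα.trans hαq
    have hqT : Ioi q ⊆ T := by
      intro t ht
      obtain ⟨u, hu, hut⟩ := exists_lt_of_csInf_lt hne ht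
      exact mu_expset_up g hu hut.le
    set z0 : ℂ := riemannZeta₁ (q + s₀) / q with hz0
    have hz0' : z0 ≠ 0 := by
      have := zeta1_ne (q + s₀) (by linarith)
      push_cast at this
      exact div_ne_zero this (by exact_mod_cast hq0.ne')
    set B : ℂ → ℂ := fun w => riemannZeta₁ (w + s₀) / w / z0 with hB
    have hBq : B q = 1 := by simp only [hB]; exact div_self hz0'
    have hBd : ∀ w : ℂ, w ≠ 0 → DifferentiableAt ℂ B w := by
      intro w hw
      refine DifferentiableAt.div_const (DifferentiableAt.div ?_ differentiableAt_id hw) _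
      exact (differentiable_riemannZeta₁.comp (differentiable_id.add_const _)).differentiableAt
    have hBc : ContinuousAt B q := (hBd q (by exact_mod_cast hq0.ne')).continuousAt
    have hev : ∀ᶠ w : ℂ in 𝓝 (q : ℂ), B w ∈ Complex.slitPlane ∧ α < w.re := by
      refine (hBc.eventually_mem ?_).and ?_
      · rw [hBq]; exact Complex.isOpen_slitPlane.mem_nhds Complex.one_mem_slitPlane
      · exact (isOpen_half α).mem_nhds (by simpa using hαq)
    obtain ⟨δ, hδ, hball⟩ := Metric.eventually_nhds_iff_ball.mp hev
    set K0 : ℂ → ℂ := fun w => Complex.log (B w) with hK0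
    have hK0d : DifferentiableOn ℂ K0 (Metric.ball (q : ℂ) δ) := by
      intro w hw
      obtain ⟨b1, b2⟩ := hball w hw
      exact ((hBd w (hwα w b2).2).clog b1).differentiableWithinAt
    have hK0e : ∀ w ∈ Metric.ball (q : ℂ) δ, Complex.exp (K0 w) = B w := fun w hw =>
      Complex.exp_log (Complex.slitPlane_ne_zero (hball w hw).1)
    set V : Set ℂ := Metric.ball (q : ℂ) δ ∩ {w : ℂ | q < w.re} with hV
    have hVo : IsOpen V := Metric.isOpen_ball.inter (isOpen_half q)
    have hVc : IsPreconnected V :=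
      ((convex_ball _ _).inter (convex_halfSpace_re_gt q)).isPreconnected
    set a : ℝ := q + δ / 4 with ha
    have haV : (a : ℂ) ∈ V := by
      refine ⟨?_, ?_⟩
      · rw [Metric.mem_ball, Complex.dist_of_im_eq (by simp)]
        simp [ha, Real.dist_eq, abs_of_pos hδ]; linarith
      · show q < (a : ℂ).re
        simp [ha]; linarith
    have hconst := log_const (D := fun w => A w - K0 w) (k := C * z0) hVo hVc
      (((hAd q hαq.le hqT).mono inter_subset_right).sub (hK0d.mono inter_subset_left)) (by
        rintro w ⟨hw1, hw2⟩
        have hB0 : B w ≠ 0 := Complex.slitPlane_ne_zero (hball w hw1).1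
        have hw0 := (hwα w (hball w hw1).2).2
        have e := hAe' q hαq.le hqT w hw2
        rw [Complex.exp_sub, hK0e w hw1, div_eq_iff hB0]
        simp only [hB]
        field_simp
        linear_combination e) haV
    set k := A a - K0 a with hk
    set K : ℂ → ℂ := fun w => (c * w / (w - α) - σ * (K0 w + k)) / w with hK
    have hsub : Metric.ball (a : ℂ) (δ / 2) ⊆ Metric.ball (q : ℂ) δ := by
      refine Metric.ball_subset_ball' ?_
      rw [Complex.dist_of_im_eq (by simp)]
      simp [ha, Real.dist_eq, abs_of_pos hδ]; linarith
    have hmem : a - 3 * δ / 8 ∈ T := by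
      refine landau_s17 (mu_ae_nlog g) (K := K) (r := δ / 2)
        (interior_maximal hqT isOpen_Ioi (by show q < a; linarith)) ?_ ?_ (by positivity) (by linarith)
      · refine DifferentiableOn.mono ?_ hsub
        refine DifferentiableOn.div (DifferentiableOn.sub
          (DifferentiableOn.div (differentiableOn_id.const_mul _) (differentiableOn_id.sub_const _) ?_)
          ((hK0d.add_const k).const_mul _)) differentiableOn_id ?_
        · exact fun w hw => (hwα w (hball w hw).2).1
        · exact fun w hw => (hwα w (hball w hw).2).2
      · filter_upwards [hVo.mem_nhds haV] with w hw
        have e := hconst w hw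
        have hw0 := (hwα w (hball w hw.1).2).2
        have hσ' : (σ : ℂ) * σ = 1 := by exact_mod_cast hσ
        simp only [hK]
        rw [div_eq_iff hw0]
        have e2 : K0 w + k = A w := by linear_combination -e
        rw [e2]; simp only [hA]
        linear_combination (-(c * w / (w - α) - w * F w)) * hσ'
    have := csInf_le hbdd hmem
    linarith
  have hw : α < (s - s₀).re := by simp; linarith
  have e := hAe' α le_rfl hαT (s - s₀) hw
  intro hz
  rw [sub_add_cancel, hz, mul_zero] at e
  exact mul_ne_zero (Complex.exp_ne_zero _) (hwα _ hw).2 e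

lemma Theta_exists {b : ℝ} (hb0 : 0 < Theta) (hb : b < Theta) :
    ∃ z : ℂ, riemannZeta z = 0 ∧ 0 < z.re ∧ z.re < 1 ∧ b < z.re := by
  have hne : (Complex.re '' {z : ℂ | riemannZeta z = 0 ∧ 0 < z.re ∧ z.re < 1}).Nonempty := by
    by_contra h
    rw [not_nonempty_iff_eq_empty] at h
    rw [Theta, h, Real.sSup_empty] at hb0
    exact lt_irrefl _ hb0
  obtain ⟨_, ⟨z, ⟨h1, h2, h3⟩, rfl⟩, h4⟩ := exists_lt_of_lt_csSup hne hb
  exact ⟨z, h1, h2, h3, h4⟩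

lemma Theta_le : Theta ≤ 1 := by
  refine Real.sSup_le ?_ zero_le_one
  rintro _ ⟨z, ⟨_, _, h⟩, rfl⟩
  exact h.le

lemma Delta_cpt {s₀ σ α X : ℝ} (h1 : s₀ < 1) (hσ : σ * σ = 1) (hα : 0 < α)
    (h : ∀ x, X ≤ x → 1 ≤ x → σ * Delta s₀ x ≤ x ^ α) :
    ∃ c, ∀ x, 1 < x → σ * Delta s₀ x ≤ c * x ^ α := by
  set M := Ssum s₀ X + |Ifun ((1 - s₀) * Real.log X)| with hM
  have hM0 : 0 ≤ M := add_nonneg (Ssum_nonneg _ _) (abs_nonneg _)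
  refine ⟨1 + M, fun x hx => ?_⟩
  have hp : 1 ≤ x ^ α := Real.one_le_rpow hx.le hα.le
  rcases le_or_gt X x with hX | hX
  · have := h x hX hx.le
    nlinarith
  · have hl := Real.log_pos hx
    have a1 := Ssum_nonneg s₀ x
    have a2 := Ssum_mono s₀ hX.le
    have hc : 0 < 1 - s₀ := by linarith
    have a3 : 0 ≤ Ifun ((1 - s₀) * Real.log x) := Ifun_nonneg (by positivity)
    have a4 : Ifun ((1 - s₀) * Real.log x) ≤ Ifun ((1 - s₀) * Real.log X) :=
      Ifun_mono (by positivity) (by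
        have := Real.log_le_log (by linarith) hX.le
        nlinarith)
    have a5 := le_abs_self (Ifun ((1 - s₀) * Real.log X))
    have a6 := abs_nonneg (Ifun ((1 - s₀) * Real.log X))
    have : σ * Delta s₀ x ≤ M := by
      rw [Delta_eq]
      rcases mul_self_eq_one_iff.mp hσ with h | h <;> rw [h] <;> linarith
    nlinarith

lemma final {s₀ : ℝ} (hs₀0 : 0 < s₀) (hs₀Θ : s₀ < Theta) {ε : ℝ} (hε : 0 < ε) {σ : ℝ}
    (hσ : σ * σ = 1) (X : ℝ) : ∃ x, X ≤ x ∧ x ^ (Theta - s₀ - ε) < σ * Delta s₀ x := by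
  by_contra! hcon
  set ε' := min ε ((Theta - s₀) / 2) with hε'
  have e1 : 0 < ε' := lt_min hε (by linarith)
  have e2 : ε' ≤ ε := min_le_left _ _
  have e3 : ε' ≤ (Theta - s₀) / 2 := min_le_right _ _
  have h1 : s₀ < 1 := lt_of_lt_of_le hs₀Θ Theta_le
  have hα : 0 < Theta - s₀ - ε' := by linarith
  obtain ⟨c, hc⟩ := Delta_cpt (X := X) h1 hσ hα (fun x hX hx => (hcon x hX).trans
    (Real.rpow_le_rpow_of_exponent_le hx (by linarith)))
  obtain ⟨z, hz, hz0, hz1, hzr⟩ := Theta_exists (b := Theta - ε') (by linarith) (by linarith)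
  have := main_lemma hs₀0 h1 hσ hα (by linarith [Theta_le]) hc z (by linarith)
  have hne : z ≠ 1 := fun h => by rw [h] at hz1; simp at hz1
  rw [riemannZeta_eq_inv_sub_mul hne] at hz
  exact mul_ne_zero (inv_ne_zero (sub_ne_zero.mpr hne)) this hz

/-- Oscillation result: for fixed `s₀ ∈ (0,Θ)` and `ε > 0`,
`Δ(x) = Ω_±(x^{Θ-s₀-ε})`. -/
theorem stmt17 (s₀ : ℝ) (hs₀0 : 0 < s₀) (hs₀Θ : s₀ < Theta) (ε : ℝ) (hε : 0 < ε) :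
    ∀ X : ℝ, ∃ x₁ x₂ : ℝ, X ≤ x₁ ∧ X ≤ x₂ ∧
      x₁ ^ (Theta - s₀ - ε) < Delta s₀ x₁ ∧
      Delta s₀ x₂ < -(x₂ ^ (Theta - s₀ - ε)) := by

  intro X
  obtain ⟨x₁, h1, h2⟩ := final hs₀0 hs₀Θ hε (σ := 1) (by norm_num) X
  obtain ⟨x₂, h3, h4⟩ := final hs₀0 hs₀Θ hε (σ := -1) (by norm_num) X
  exact ⟨x₁, x₂, h1, h3, by linarith, by linarith⟩
end
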